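/- arXiv:math/0402330 — 3 statements merged into one kernel-verified Lean document; each statement's English description precedes it below -/
import Mathlib

section
/- Let k be an algebraically closed field of characteristic zero and W the first Weyl algebra. Every ∂_q-invariant automorphism θ of M_N(W) has the form θ(a(p,q)) = Q^{-1}(p)·a(p+α, q-h(p))·Q(p) for some α ∈ k, polynomial h(p) ∈ k[p], and matrix Q ∈ M_N(k[p]) invertible in M_N(k[p]). Moreover, θ is continuous in the q-topology if and only if h = 0. -/
open Polynomial

set_option synthInstance.maxHeartbeats 1000000
set_option maxHeartbeats 1000000

noncomputable section

variable (k : Type*) [Field k] [CharZero k]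

/-- The operator `p`: multiplication by `X` on `k[X]`. -/
def pOp : Module.End k (Polynomial k) := LinearMap.mulLeft k (X : Polynomial k)

/-- The operator `q = d/dX` on `k[X]`. -/
def qOp : Module.End k (Polynomial k) := derivative

/-- The (first) Weyl algebra, realized concretely as the subalgebra of
`End_k(k[X])` generated by multiplication by `X` and `d/dX`.  (In characteristic
zero this is a faithful model of `k⟨p,q | qp - pq = 1⟩`.) -/
def WeylA : Subalgebra k (Module.End k (Polynomial k)) :=
  Algebra.adjoin k {pOp k, qOp k}

/-- The element `p` of the Weyl algebra. -/
def pW : WeylA k := ⟨pOp k, Algebra.subset_adjoin (Set.mem_insert _ _)⟩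

/-- The element `q` of the Weyl algebra. -/
def qW : WeylA k := ⟨qOp k, Algebra.subset_adjoin (Set.mem_insert_of_mem _ rfl)⟩

variable (N : ℕ)

/-- `M_N(W)`, the `N×N` matrices over the Weyl algebra. -/
abbrev MW := Matrix (Fin N) (Fin N) (WeylA k)

/-- The scalar matrix `p·Id_N`. -/
def pM : MW k N := Matrix.diagonal fun _ => pW k

/-- The scalar matrix `q·Id_N`. -/
def qM : MW k N := Matrix.diagonal fun _ => qW k

/-- The derivation `∂_q(a) = [a,p]` on `M_N(W)`. -/
def dq (a : MW k N) : MW k N := a * pM k N - pM k N * a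

/-- Evaluation of a polynomial at `p`, i.e. the embedding `k[p] → W`. -/
def polyP : Polynomial k →ₐ[k] WeylA k := Polynomial.aeval (pW k)

/-- Evaluation of a polynomial at `q`, i.e. the embedding `k[q] → W`. -/
def polyQ : Polynomial k →ₐ[k] WeylA k := Polynomial.aeval (qW k)


/-- `θ` is continuous in the `q`-topology (defined by the left ideals
`M_N(W)·q^n`). -/
def QContinuous (N : ℕ) (θ : MW k N ≃ₐ[k] MW k N) : Prop :=
  ∀ n : ℕ, ∃ m : ℕ, ∀ x : MW k N,
    (∃ y : MW k N, x = y * qM k N ^ m) → ∃ z : MW k N, θ x = z * qM k N ^ n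

/-!
The centralizer of `p` in `M_N(W)` is `M_N(k[p])`. Since `θ` commutes with `[·, p]`, it preserves
this centralizer, and `θ p - p` is central, hence a constant `α` because `W` has centre `k` in
characteristic zero. So `θ` acts on the centre `k[p]` of `M_N(k[p])` as the translation
`p ↦ p + α`. By Skolem–Noether over the principal ideal domain `k[p]`, it acts on `M_N(k[p])` as
this translation followed by conjugation by some `Q`. Once the conjugation is undone, `θ q` and `q`
have the same commutators with `M_N(k[p])`, so they differ by a scalar `h(p)`.

Continuity turns on `θ (q ^ m) = Q⁻¹ (q - h) ^ m Q`. If `h = 0`, then `Q` can be moved across a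
high power of `q`, since `[q, ·]` is nilpotent at each element of `M_N(k[p])`. If `h ≠ 0`, then
`(q - h) ^ m` is injective on `k[X]`, by degree, whereas operators in `W q` annihilate constants.
-/

section MatrixEndomorphisms

open Matrix

variable {n R : Type*} [Fintype n] [DecidableEq n] [CommRing R]

theorem single_one_mul_eq_sum (o i : n) (A : Matrix n n R) :
    single o i 1 * A = ∑ j, A i j • single o j 1 := by
  ext a b
  by_cases ha : a = o
  · simp [ha, Matrix.sum_apply, single_apply]
  · simp [ha, Matrix.sum_apply, Ne.symm ha]

section Corner

variable {M : Type*} [AddCommGroup M] [Module R M]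

/-- The decomposition `M ≃ (E₀₀ M)ⁿ` of a module `M` over the matrix ring, `x ↦ (E₀ᵢ x)ᵢ`. The
module structure is encoded by `φ`, and the index `0` is `o`. -/
def cornerEquiv (φ : Matrix n n R →ₐ[R] Module.End R M) (o : n) :
    M ≃ₗ[R] (n → LinearMap.range (φ (single o o 1))) where
  toFun x i := ⟨φ (single o i 1) x, φ (single o i 1) x, by
    rw [← Module.End.mul_apply, ← map_mul, single_mul_single_same, mul_one]⟩
  map_add' x y := by ext; simp
  map_smul' r x := by ext; simp
  invFun y := ∑ i, φ (single i o 1) (y i)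
  left_inv x := by
    simp only [← Module.End.mul_apply, ← map_mul, single_mul_single_same, mul_one]
    rw [← LinearMap.sum_apply, ← map_sum, sum_single_one, map_one, Module.End.one_apply]
  right_inv y := by
    ext i
    obtain ⟨x, hx⟩ := (y i).2
    simp only [map_sum, ← Module.End.mul_apply, ← map_mul]
    rw [Finset.sum_eq_single i, ← hx, ← Module.End.mul_apply, ← map_mul]
    · simp
    · intro j _ hj
      rw [single_mul_single_of_ne _ _ _ _ hj.symm, map_zero, LinearMap.zero_apply]
    · simp

theorem cornerEquiv_map_apply (φ : Matrix n n R →ₐ[R] Module.End R M) (o : n) (A : Matrix n n R)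
    (x : M) (i : n) :
    cornerEquiv φ o (φ A x) i = ∑ j, A i j • cornerEquiv φ o x j := by
  ext
  simp only [cornerEquiv, LinearEquiv.coe_mk, LinearMap.coe_mk, AddHom.coe_mk,
    ← Module.End.mul_apply, ← map_mul, single_one_mul_eq_sum, map_sum, map_smul,
    LinearMap.sum_apply, LinearMap.smul_apply, Submodule.coe_sum, Submodule.coe_smul]

variable [IsDomain R] [IsPrincipalIdealRing R] [Module.Free R M] [Module.Finite R M]

theorem finrank_range_map_single (hM : Module.finrank R M = Fintype.card n)
    (φ : Matrix n n R →ₐ[R] Module.End R M) (o : n) :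
    Module.finrank R (LinearMap.range (φ (single o o 1))) = 1 := by
  have : Nonempty n := ⟨o⟩
  have h := (cornerEquiv φ o).finrank_eq
  rw [hM, Module.finrank_pi_fintype] at h
  simpa using h

theorem exists_linearEquiv_map_eq_mulVec (hM : Module.finrank R M = Fintype.card n)
    (φ : Matrix n n R →ₐ[R] Module.End R M) :
    ∃ e : M ≃ₗ[R] (n → R), ∀ A x, e (φ A x) = A *ᵥ e x := by
  rcases isEmpty_or_nonempty n with _ | ⟨⟨o⟩⟩
  · exact ⟨.ofFinrankEq _ _ (by simpa using hM), fun _ _ => Subsingleton.elim _ _⟩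
  · let c : LinearMap.range (φ (single o o 1)) ≃ₗ[R] R :=
      .ofFinrankEq _ _ (by rw [finrank_range_map_single hM, Module.finrank_self])
    refine ⟨cornerEquiv φ o ≪≫ₗ .piCongrRight fun _ => c, fun A x => ?_⟩
    ext i
    simp [cornerEquiv_map_apply, mulVec, dotProduct]

end Corner

variable [IsDomain R] [IsPrincipalIdealRing R]

theorem exists_units_map_eq_conj (φ : Matrix n n R →ₐ[R] Matrix n n R) :
    ∃ Q : (Matrix n n R)ˣ, ∀ A, φ A = (↑Q⁻¹ : Matrix n n R) * A * Q := by
  obtain ⟨e, he⟩ := exists_linearEquiv_map_eq_mulVec (M := n → R) (by simp)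
    (toLinAlgEquiv'.toAlgHom.comp φ)
  let Q := Units.map (LinearMap.toMatrixAlgEquiv' (R := R) (n := n)).toMonoidHom
    (LinearMap.GeneralLinearGroup.ofLinearEquiv e)
  have hQ (x : n → R) : (Q : Matrix n n R) *ᵥ x = e x := LinearMap.toMatrix'_mulVec _ x
  refine ⟨Q, fun A => ?_⟩
  rw [mul_assoc, Units.eq_inv_mul_iff_mul_eq]
  apply Matrix.ext_of_mulVec_single
  intro i
  rw [← mulVec_mulVec, ← mulVec_mulVec, hQ, hQ]
  exact he A _

theorem exists_units_map_eq_conj_map (τ : R ≃+* R) (ψ : Matrix n n R →+* Matrix n n R)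
    (hψ : ∀ r, ψ (scalar n r) = scalar n (τ r)) :
    ∃ Q : (Matrix n n R)ˣ, ∀ A, ψ A = (↑Q⁻¹ : Matrix n n R) * A.map τ * Q := by
  let φ : Matrix n n R →ₐ[R] Matrix n n R :=
    { ψ.comp τ.symm.mapMatrix.toRingHom with
      commutes' := fun r => by
        simpa [algebraMap_eq_diagonal, diagonal_map, Pi.algebraMap_def] using hψ (τ.symm r) }
  obtain ⟨Q, hQ⟩ := exists_units_map_eq_conj φ
  refine ⟨Q, fun A => ?_⟩
  have hA : φ (A.map τ) = ψ A := congrArg ψ (by ext; simp)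
  rw [← hA, hQ]

end MatrixEndomorphisms

theorem exists_pow_add_mul_eq_mul_pow {A : Type*} [Ring A] {q b : A} {d : ℕ}
    (hb : (fun x => ⁅q, x⁆)^[d] b = 0) (n : ℕ) : ∃ z, q ^ (n + d) * b = z * q ^ n := by
  induction d generalizing b n with
  | zero => exact ⟨0, by simp_all⟩
  | succ d ihd =>
    induction n with
    | zero => exact ⟨q ^ (0 + (d + 1)) * b, by simp⟩
    | succ n ihn =>
      obtain ⟨y, hy⟩ := ihn
      obtain ⟨z, hz⟩ := ihd hb (n + 1)
      refine ⟨y + z, ?_⟩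
      calc q ^ (n + 1 + (d + 1)) * b
          = q ^ (n + (d + 1)) * b * q + q ^ (n + 1 + d) * ⁅q, b⁆ := by
            rw [Ring.lie_def, add_right_comm n 1, pow_succ, ← add_assoc, add_right_comm n 1 d]
            noncomm_ring
        _ = (y + z) * q ^ (n + 1) := by rw [hy, hz, add_mul, pow_succ q n, mul_assoc]

theorem commute_sub_of_lie_eq {A : Type*} [Ring A] {a b c : A} (h : ⁅a, c⁆ = ⁅b, c⁆) :
    Commute (a - b) c := by
  rw [commute_iff_eq, sub_mul, mul_sub, sub_eq_sub_iff_sub_eq_sub]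
  exact h

theorem map_sub_self_mem_center {R A : Type*} [CommRing R] [Ring A] [Algebra R A]
    (θ : A ≃ₐ[R] A) {p : A} (hθ : ∀ a, θ ⁅a, p⁆ = ⁅θ a, p⁆) :
    θ p - p ∈ Subalgebra.center R A := by
  rw [Subalgebra.mem_center_iff]
  intro b
  obtain ⟨a, rfl⟩ := θ.surjective b
  rw [mul_sub, sub_mul, sub_eq_sub_iff_sub_eq_sub]
  simpa only [Ring.lie_def, map_sub, map_mul] using hθ a

section WeylAlgebra

variable {k N}

omit [CharZero k]

theorem polyP_apply (g f : k[X]) : (polyP k g : Module.End k k[X]) f = g * f := by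
  have hg : (polyP k g : Module.End k k[X]) = aeval (Algebra.lmul k k[X] X) g :=
    aeval_subalgebra_coe g (WeylA k) (pW k)
  rw [hg, aeval_algHom_apply, aeval_X_left_apply]
  rfl

theorem polyP_injective : Function.Injective (polyP k) := fun a b hab => by
  simpa [polyP_apply] using congr((($hab : WeylA k) : Module.End k k[X]) 1)

theorem lie_qW_polyP (g : k[X]) : ⁅qW k, polyP k g⁆ = polyP k (derivative g) := by
  refine Subtype.ext (LinearMap.ext fun f => ?_)
  change derivative ((polyP k g : Module.End k k[X]) f)
    - (polyP k g : Module.End k k[X]) (derivative f)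
    = (polyP k (derivative g) : Module.End k k[X]) f
  simp only [polyP_apply, derivative_mul, add_sub_cancel_right]

theorem exists_eq_polyP_of_commute_pW {w : WeylA k} (hw : Commute w (pW k)) :
    ∃ g, w = polyP k g := by
  refine ⟨(w : Module.End k k[X]) 1, Subtype.ext (LinearMap.ext fun f => ?_)⟩
  have hwf : w * polyP k f = polyP k f * w :=
    Algebra.commute_of_mem_adjoin_singleton_of_commute (aeval_mem_adjoin_singleton k _) hw
  calc (w : Module.End k k[X]) f
      = ((w * polyP k f : WeylA k) : Module.End k k[X]) 1 := by simp [polyP_apply]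
    _ = (polyP k ((w : Module.End k k[X]) 1) : Module.End k k[X]) f := by
      rw [hwf, Subalgebra.coe_mul, Module.End.mul_apply, polyP_apply, polyP_apply, mul_comm]

theorem injective_qW_sub_polyP {h : k[X]} (hh : h ≠ 0) :
    Function.Injective ((qW k - polyP k h : WeylA k) : Module.End k k[X]) := by
  rw [injective_iff_map_eq_zero]
  intro f hf
  have hf' : derivative f = h * f := by
    rw [← polyP_apply]
    exact sub_eq_zero.mp hf
  by_contra hf0
  exact (degree_le_mul_left f hh).not_gt (mul_comm h f ▸ hf' ▸ degree_derivative_lt hf0)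

theorem eq_zero_of_pow_mul_polyP_eq_mul_qW {h g : k[X]} (hh : h ≠ 0) {m : ℕ} {z : WeylA k}
    (hz : (qW k - polyP k h) ^ m * polyP k g = z * qW k) : g = 0 := by
  have h1 := congr((($hz : WeylA k) : Module.End k k[X]) 1)
  have hq : (qW k : Module.End k k[X]) 1 = 0 := derivative_one
  rw [Subalgebra.coe_mul, Subalgebra.coe_mul, Module.End.mul_apply, Module.End.mul_apply, hq,
    map_zero, polyP_apply, mul_one, Subalgebra.coe_pow, Module.End.coe_pow] at h1
  exact (injective_qW_sub_polyP hh).iterate m (h1.trans (iterate_map_zero _ m).symm)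

variable (k N) in
/-- The embedding `M_N(k[p]) → M_N(W)`. -/
def polyPMatrix : Matrix (Fin N) (Fin N) k[X] →ₐ[k] MW k N := (polyP k).mapMatrix

theorem polyPMatrix_injective : Function.Injective (polyPMatrix k N) :=
  Matrix.map_injective polyP_injective

theorem polyPMatrix_scalar (g : k[X]) :
    polyPMatrix k N (Matrix.scalar (Fin N) g) = Matrix.diagonal fun _ => polyP k g :=
  Matrix.diagonal_map (map_zero _)

theorem pM_eq_polyPMatrix : pM k N = polyPMatrix k N (Matrix.scalar (Fin N) X) := by
  rw [polyPMatrix_scalar, polyP, aeval_X, pM]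

theorem commute_polyPMatrix_pM (B : Matrix (Fin N) (Fin N) k[X]) :
    Commute (polyPMatrix k N B) (pM k N) := by
  rw [pM_eq_polyPMatrix]
  exact ((Matrix.scalar_commute X (Commute.all X) B).symm).map (polyPMatrix k N)

theorem lie_qM_polyPMatrix (B : Matrix (Fin N) (Fin N) k[X]) :
    ⁅qM k N, polyPMatrix k N B⁆ = polyPMatrix k N (B.map derivative) := by
  ext1 i j
  simpa [Ring.lie_def, qM, polyPMatrix] using lie_qW_polyP (B i j)

theorem exists_eq_polyPMatrix_of_commute_pM {a : MW k N} (ha : Commute a (pM k N)) :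
    ∃ B, a = polyPMatrix k N B := by
  have haij (i j) : ∃ g, a i j = polyP k g := exists_eq_polyP_of_commute_pW <| by
    simpa [pM, commute_iff_eq] using congr($ha i j)
  choose B hB using haij
  exact ⟨Matrix.of B, Matrix.ext hB⟩

theorem exists_eq_scalar_of_commute_polyPMatrix {c : MW k N}
    (hc : ∀ B, Commute c (polyPMatrix k N B)) :
    ∃ h, c = polyPMatrix k N (Matrix.scalar (Fin N) h) := by
  obtain ⟨B, rfl⟩ := exists_eq_polyPMatrix_of_commute_pM (pM_eq_polyPMatrix (k := k) ▸ hc _)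
  have hB : B ∈ Set.range (Matrix.scalar (Fin N)) :=
    Matrix.mem_range_scalar_of_commute_single fun i j _ => polyPMatrix_injective <| by
      simpa only [commute_iff_eq, map_mul] using (hc (Matrix.single i j 1)).symm
  obtain ⟨h, rfl⟩ := hB
  exact ⟨h, rfl⟩

theorem iterate_lie_qM_polyPMatrix (d : ℕ) (B : Matrix (Fin N) (Fin N) k[X]) :
    (fun a => ⁅qM k N, a⁆)^[d] (polyPMatrix k N B) = polyPMatrix k N (B.map derivative^[d]) := by
  induction d generalizing B with
  | zero => simp
  | succ d ih =>
    rw [Function.iterate_succ_apply, lie_qM_polyPMatrix, ih, Matrix.map_map,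
      Function.iterate_succ]

theorem exists_qM_pow_mul_polyPMatrix_eq (B : Matrix (Fin N) (Fin N) k[X]) (n : ℕ) :
    ∃ m z, qM k N ^ m * polyPMatrix k N B = z * qM k N ^ n := by
  obtain ⟨d, hd⟩ := Finite.exists_le fun ij : Fin N × Fin N => (B ij.1 ij.2).natDegree
  have hB : B.map derivative^[d + 1] = 0 := by
    ext1 i j
    exact iterate_derivative_eq_zero (Nat.lt_succ_of_le (hd (i, j)))
  refine ⟨n + (d + 1), exists_pow_add_mul_eq_mul_pow (A := MW k N) ?_ n⟩
  rw [iterate_lie_qM_polyPMatrix, hB, map_zero]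

theorem qM_sub_polyPMatrix_scalar (h : k[X]) :
    qM k N - polyPMatrix k N (Matrix.scalar (Fin N) h)
      = Matrix.diagonal fun _ => qW k - polyP k h := by
  rw [polyPMatrix_scalar]
  exact Matrix.diagonal_sub (α := WeylA k) _ _

theorem eq_zero_of_pow_mul_polyPMatrix_eq_mul_qM {h : k[X]} (hh : h ≠ 0) {m : ℕ}
    {B : Matrix (Fin N) (Fin N) k[X]} {z : MW k N}
    (hz : (qM k N - polyPMatrix k N (Matrix.scalar (Fin N) h)) ^ m * polyPMatrix k N B
      = z * qM k N) : B = 0 := by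
  rw [qM_sub_polyPMatrix_scalar, Matrix.diagonal_pow] at hz
  ext1 i j
  refine eq_zero_of_pow_mul_polyP_eq_mul_qW hh (m := m) (z := z i j) ?_
  simpa [qM, polyPMatrix] using congr($hz i j)

theorem exists_algHom_map_polyPMatrix (θ : MW k N →ₐ[k] MW k N)
    (hθ : ∀ a, θ (dq k N a) = dq k N (θ a)) :
    ∃ ψ : Matrix (Fin N) (Fin N) k[X] →ₐ[k] Matrix (Fin N) (Fin N) k[X],
      ∀ B, θ (polyPMatrix k N B) = polyPMatrix k N (ψ B) := by
  have hrange (B) : θ (polyPMatrix k N B) ∈ (polyPMatrix k N).range := by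
    have hB : Commute (θ (polyPMatrix k N B)) (pM k N) := by
      refine (commute_iff_lie_eq (R := MW k N)).mpr ?_
      calc ⁅θ (polyPMatrix k N B), pM k N⁆ = θ ⁅polyPMatrix k N B, pM k N⁆ := (hθ _).symm
        _ = 0 := by rw [commute_iff_lie_eq.mp (commute_polyPMatrix_pM B), map_zero]
    obtain ⟨C, hC⟩ := exists_eq_polyPMatrix_of_commute_pM hB
    exact ⟨C, hC.symm⟩
  let e := AlgEquiv.ofInjective (polyPMatrix k N) polyPMatrix_injective
  refine ⟨(e.symm : _ →ₐ[k] _).comp ((θ.comp (polyPMatrix k N)).codRestrict _ hrange), fun B => ?_⟩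
  exact congrArg Subtype.val (e.apply_symm_apply ⟨_, hrange B⟩).symm

theorem map_polyPMatrix_scalar {α : k} {θ : MW k N →ₐ[k] MW k N}
    (hp : θ (pM k N) = pM k N + algebraMap k (MW k N) α) (g : k[X]) :
    θ (polyPMatrix k N (Matrix.scalar (Fin N) g))
      = polyPMatrix k N (Matrix.scalar (Fin N) (taylor α g)) := by
  let ι := (polyPMatrix k N).comp (Matrix.scalarAlgHom (Fin N) k)
  have hX : θ.comp ι = ι.comp (taylorAlgHom α) := by
    apply algHom_ext
    change θ (polyPMatrix k N (Matrix.scalar (Fin N) X))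
      = polyPMatrix k N (Matrix.scalar (Fin N) (taylor α X))
    rw [← pM_eq_polyPMatrix, hp, taylor_X, map_add, map_add, ← pM_eq_polyPMatrix]
    congr 1
    exact ((polyPMatrix k N).commutes α).symm
  exact congr($hX g)

theorem exists_map_qM_eq_sub_of_map_polyPMatrix {α : k} {θ : MW k N →ₐ[k] MW k N}
    (hθ : ∀ B, θ (polyPMatrix k N B) = polyPMatrix k N (B.map (taylor α))) :
    ∃ h, θ (qM k N) = qM k N - polyPMatrix k N (Matrix.scalar (Fin N) h) := by
  have hlie (B : Matrix (Fin N) (Fin N) k[X]) :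
      ⁅θ (qM k N), polyPMatrix k N (B.map (taylor α))⁆
        = ⁅qM k N, polyPMatrix k N (B.map (taylor α))⁆ := by
    calc ⁅θ (qM k N), polyPMatrix k N (B.map (taylor α))⁆
        = θ ⁅qM k N, polyPMatrix k N B⁆ := by
          rw [← hθ, Ring.lie_def, Ring.lie_def, map_sub, map_mul, map_mul]
      _ = polyPMatrix k N ((B.map (taylor α)).map derivative) := by
          rw [lie_qM_polyPMatrix, hθ]
          congr 1
          ext1 i j
          simp [taylor_apply, derivative_comp]
      _ = _ := (lie_qM_polyPMatrix _).symm
  obtain ⟨h, hh⟩ := exists_eq_scalar_of_commute_polyPMatrix (c := qM k N - θ (qM k N)) fun B => by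
    have hB : (B.map (taylor (-α))).map (taylor α) = B := by
      ext1 i j
      simp [taylor_taylor]
    exact commute_sub_of_lie_eq (A := MW k N) (hB ▸ hlie (B.map (taylor (-α)))).symm
  exact ⟨h, hh ▸ (sub_sub_cancel (G := MW k N) _ _).symm⟩

theorem exists_map_qM_eq_conj_sub {α : k} {Q : (Matrix (Fin N) (Fin N) k[X])ˣ}
    {θ : MW k N →ₐ[k] MW k N}
    (hθ : ∀ B, θ (polyPMatrix k N B) = polyPMatrix k N (Q⁻¹.val * B.map (taylor α) * Q)) :
    ∃ h, θ (qM k N) = polyPMatrix k N Q⁻¹.val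
      * (qM k N - polyPMatrix k N (Matrix.scalar (Fin N) h)) * polyPMatrix k N Q := by
  let u : (MW k N)ˣ := Units.map (polyPMatrix k N).toMonoidHom Q
  let conj := MulSemiringAction.toAlgEquiv k (MW k N) (ConjAct.toConjAct u)
  have hconj (a : MW k N) : conj (u⁻¹.val * a * u) = a := by
    change u.val * (u⁻¹.val * a * u) * u⁻¹.val = a
    simp [mul_assoc]
  obtain ⟨h, hh⟩ := exists_map_qM_eq_sub_of_map_polyPMatrix (α := α)
    (θ := conj.toAlgHom.comp θ) fun B => by
      calc conj (θ (polyPMatrix k N B))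
          = conj (u⁻¹.val * polyPMatrix k N (B.map (taylor α)) * u) := by
            refine congrArg conj ((hθ B).trans ?_)
            rw [map_mul, map_mul]
            rfl
        _ = polyPMatrix k N (B.map (taylor α)) := hconj _
  exact ⟨h, conj.injective (hh.trans (hconj _).symm)⟩

theorem qContinuous_iff_eq_zero (hN : 0 < N) {θ : MW k N ≃ₐ[k] MW k N} {h : k[X]}
    {Q : (Matrix (Fin N) (Fin N) k[X])ˣ}
    (hq : θ (qM k N) = polyPMatrix k N Q⁻¹.val
      * (qM k N - polyPMatrix k N (Matrix.scalar (Fin N) h)) * polyPMatrix k N Q) :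
    QContinuous k N θ ↔ h = 0 := by
  have : Nonempty (Fin N) := ⟨⟨0, hN⟩⟩
  let u : (MW k N)ˣ := Units.map (polyPMatrix k N).toMonoidHom Q
  set q' := qM k N - polyPMatrix k N (Matrix.scalar (Fin N) h) with hq'
  have hpow (m : ℕ) : θ (qM k N ^ m) = u⁻¹.val * q' ^ m * u := by
    rw [map_pow, hq]
    exact Units.conj_pow' u q' m
  constructor
  · intro hθ
    obtain ⟨m, hm⟩ := hθ 1
    obtain ⟨z, hz⟩ := hm (θ.symm u * qM k N ^ m) ⟨_, rfl⟩
    by_contra hh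
    refine Q.ne_zero (eq_zero_of_pow_mul_polyPMatrix_eq_mul_qM hh (m := m) (z := z) ?_)
    rw [map_mul, θ.apply_symm_apply, hpow, ← mul_assoc, ← mul_assoc, Units.mul_inv, one_mul,
      pow_one] at hz
    exact hz
  · rintro rfl n
    obtain ⟨m, z, hz⟩ : ∃ m z, qM k N ^ m * u = z * qM k N ^ n :=
      exists_qM_pow_mul_polyPMatrix_eq Q.val n
    have hq0 : q' = qM k N := by
      rw [hq', map_zero, map_zero]
      exact sub_zero (G := MW k N) _
    refine ⟨m, ?_⟩
    rintro _ ⟨y, rfl⟩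
    refine ⟨θ y * u⁻¹.val * z, ?_⟩
    rw [map_mul, hpow, hq0, mul_assoc u⁻¹.val, hz, mul_assoc, mul_assoc]

end WeylAlgebra

section CharZero

instance instIsCentralWeylA : Algebra.IsCentral k (WeylA k) where
  out w hw := by
    rw [Subalgebra.mem_center_iff] at hw
    obtain ⟨g, rfl⟩ := exists_eq_polyP_of_commute_pW (hw (pW k)).symm
    have hg : derivative g = 0 := by
      apply polyP_injective
      rw [map_zero, ← lie_qW_polyP, ← commute_iff_lie_eq]
      exact hw (qW k)
    rw [eq_C_of_derivative_eq_zero hg, ← algebraMap_eq, AlgHom.commutes]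
    exact Subalgebra.algebraMap_mem _ _

variable {k N}

theorem exists_map_pM_eq_add_algebraMap (θ : MW k N ≃ₐ[k] MW k N)
    (hθ : ∀ a, θ (dq k N a) = dq k N (θ a)) :
    ∃ α : k, θ (pM k N) = pM k N + algebraMap k (MW k N) α := by
  have hc := map_sub_self_mem_center θ (p := pM k N) hθ
  rw [Algebra.IsCentral.center_eq_bot, Algebra.mem_bot] at hc
  obtain ⟨α, hα⟩ := hc
  exact ⟨α, (sub_eq_iff_eq_add' (G := MW k N)).mp hα.symm⟩

theorem exists_units_map_polyPMatrix_eq_conj (θ : MW k N ≃ₐ[k] MW k N)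
    (hθ : ∀ a, θ (dq k N a) = dq k N (θ a)) :
    ∃ (α : k) (Q : (Matrix (Fin N) (Fin N) k[X])ˣ), ∀ B,
      θ (polyPMatrix k N B) = polyPMatrix k N (Q⁻¹.val * B.map (taylor α) * Q) := by
  obtain ⟨α, hα⟩ := exists_map_pM_eq_add_algebraMap θ hθ
  obtain ⟨ψ, hψ⟩ := exists_algHom_map_polyPMatrix θ.toAlgHom hθ
  obtain ⟨Q, hQ⟩ := exists_units_map_eq_conj_map (taylorEquiv α).toRingEquiv ψ.toRingHom
    fun g => polyPMatrix_injective <|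
      (hψ _).symm.trans (map_polyPMatrix_scalar (θ := θ.toAlgHom) hα g)
  exact ⟨α, Q, fun B => (hψ B).trans congr(polyPMatrix k N $(hQ B))⟩

end CharZero

theorem dq_invariant_automorphism_classification_general (N : ℕ) (hN : 0 < N)
    (θ : MW k N ≃ₐ[k] MW k N)
    (hθ : ∀ a : MW k N, θ (dq k N a) = dq k N (θ a)) :
    ∃ (α : k) (h : Polynomial k) (Q Qinv : Matrix (Fin N) (Fin N) (Polynomial k)),
      Q * Qinv = 1 ∧ Qinv * Q = 1 ∧
      θ (qM k N) =
        Qinv.map (polyP k) * (qM k N - Matrix.diagonal fun _ => polyP k h) *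
          Q.map (polyP k) ∧
      (∀ B : Matrix (Fin N) (Fin N) (Polynomial k),
        θ (B.map (polyP k)) =
          (Qinv * B.map (fun b => b.comp (X + C α)) * Q).map (polyP k)) ∧
      (QContinuous k N θ ↔ h = 0) := by
  obtain ⟨α, Q, hQ⟩ := exists_units_map_polyPMatrix_eq_conj θ hθ
  obtain ⟨h, hq⟩ := exists_map_qM_eq_conj_sub (θ := θ.toAlgHom) hQ
  exact ⟨α, h, Q, ↑Q⁻¹, Q.mul_inv, Q.inv_mul, polyPMatrix_scalar h ▸ hq, hQ,
    qContinuous_iff_eq_zero hN hq⟩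

/-- Theorem 3.3.5: every `∂_q`-invariant automorphism of `M_N(W)` is of the
form `θ_{α,Q,h} : a(p,q) ↦ Q⁻¹(p)·a(p+α, q-h(p))·Q(p)`; it is continuous in
the `q`-topology iff `h = 0`. -/
theorem dq_invariant_automorphism_classification [IsAlgClosed k] (N : ℕ) (hN : 0 < N)
    (θ : MW k N ≃ₐ[k] MW k N)
    (hθ : ∀ a : MW k N, θ (dq k N a) = dq k N (θ a)) :
    ∃ (α : k) (h : Polynomial k) (Q Qinv : Matrix (Fin N) (Fin N) (Polynomial k)),
      Q * Qinv = 1 ∧ Qinv * Q = 1 ∧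
      θ (qM k N) =
        Qinv.map (polyP k) * (qM k N - Matrix.diagonal fun _ => polyP k h) *
          Q.map (polyP k) ∧
      (∀ B : Matrix (Fin N) (Fin N) (Polynomial k),
        θ (B.map (polyP k)) =
          (Qinv * B.map (fun b => b.comp (X + C α)) * Q).map (polyP k)) ∧
      (QContinuous k N θ ↔ h = 0) :=
  dq_invariant_automorphism_classification_general k N hN θ hθ

end
end

section
/- Let S ⊆ M_N(W) be a ∂_q-invariant subalgebra of the matrix algebra over the first Weyl algebra such that M_N(W) decomposes as the direct sum ⊕_{n≥0} p^n·S. Then there exists a ∂_q-invariant automorphism θ of M_N(W) with θ(p) = p and θ(S) = M_N(k[q]). -/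
/-!
The decomposition amounts to `M_N(W) = S ⊕ p · M_N(W)`. Projecting to `S` along `p · M_N(W)`
commutes with `∂_q`, because `p · M_N(W)` is `∂_q`-stable as well. Since `k[p]` is the centralizer
of `p` in `W`, the projection preserves `M_N(k[p])`, so `S ∩ M_N(k[p])` is a complement of the
kernel of `p ↦ 0` and maps isomorphically onto `M_N(k)`. The matrix units therefore lift to
`S ∩ M_N(k[p])`, and they are conjugate to the standard ones under `GL_N(k[p])`, as `k[p]` is a
Bezout domain. This conjugation fixes `p`, so we may assume that `S` contains the matrix units.

Then the projection of `q` to `S` has as its diagonal entries elements `c` with `c · 1 ∈ S` and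
`[c, p] = 1`, that is, `c = q + g(p)` for a polynomial `g`. The automorphism of `W` fixing `p` and
sending `c` to `q` moves `S` to a subalgebra containing `M_N(k[q])`, and the two are equal because
both are complements of `p · M_N(W)`.
-/

open Polynomial

set_option synthInstance.maxHeartbeats 1000000
set_option maxHeartbeats 1000000

noncomputable section

variable (k : Type*) [Field k] [CharZero k]

variable (N : ℕ)

section StableComplement

variable {R A B : Type*} [CommRing R] [Ring A] [Algebra R A] [Ring B] [Algebra R B]

theorem isCompl_range_mulLeft_of_pow_decomposition (P : A) (S : Submodule R A)
    (hex : ∀ x : A, ∃ (m : ℕ) (s : ℕ → A), (∀ i, s i ∈ S) ∧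
      x = ∑ i ∈ Finset.range (m + 1), P ^ i * s i)
    (huniq : ∀ (m : ℕ) (s : ℕ → A), (∀ i, s i ∈ S) →
      ∑ i ∈ Finset.range (m + 1), P ^ i * s i = 0 → ∀ i ∈ Finset.range (m + 1), s i = 0) :
    IsCompl S (LinearMap.range (LinearMap.mulLeft R P)) := by
  have mul_sum (m : ℕ) (s : ℕ → A) : ∑ i ∈ Finset.range m, P ^ (i + 1) * s i =
      P * ∑ i ∈ Finset.range m, P ^ i * s i := by
    simp only [Finset.mul_sum, pow_succ', mul_assoc]
  refine ⟨Submodule.disjoint_def.2 ?_, Submodule.codisjoint_iff_exists_add_eq.2 fun x => ?_⟩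
  · rintro _ hPt ⟨t, rfl⟩
    obtain ⟨m, s, hs, rfl⟩ := hex t
    let s' : ℕ → A := fun i => i.casesOn (-(P * ∑ i ∈ Finset.range (m + 1), P ^ i * s i)) s
    have hs' : ∀ i, s' i ∈ S
      | 0 => neg_mem hPt
      | i + 1 => hs i
    have hsum : ∑ i ∈ Finset.range (m + 1 + 1), P ^ i * s' i = 0 := by
      simp [Finset.sum_range_succ' _ (m + 1), s', mul_sum]
    exact neg_eq_zero.1 (huniq (m + 1) s' hs' hsum 0 (by simp))
  · obtain ⟨m, s, hs, rfl⟩ := hex x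
    refine ⟨s 0, _, hs 0, ⟨∑ i ∈ Finset.range m, P ^ i * s (i + 1), rfl⟩, ?_⟩
    rw [LinearMap.mulLeft_apply, ← mul_sum m fun i => s (i + 1), Finset.sum_range_succ', pow_zero,
      one_mul, add_comm]

/-- A non-unital subalgebra `S` of `A` that is stable under `⁅·, P⁆` and complementary, as a
submodule, to the right ideal `P * A`. -/
structure IsStableComplement (P : A) (S : NonUnitalSubalgebra R A) : Prop where
  lie_mem : ∀ a ∈ S, ⁅a, P⁆ ∈ S
  isCompl : IsCompl S.toSubmodule (LinearMap.range (LinearMap.mulLeft R P))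

namespace IsStableComplement

variable {P : A} {S : NonUnitalSubalgebra R A}

theorem eq_zero_of_eq_mul (h : IsStableComplement P S) {s t : A} (hs : s ∈ S) (hst : s = P * t) :
    s = 0 :=
  Submodule.disjoint_def.1 h.isCompl.disjoint s hs ⟨t, hst.symm⟩

theorem exists_eq_add_mul (h : IsStableComplement P S) (x : A) : ∃ s ∈ S, ∃ t, x = s + P * t := by
  obtain ⟨s, _, hs, ⟨t, rfl⟩, hx⟩ :=
    Submodule.codisjoint_iff_exists_add_eq.1 h.isCompl.codisjoint x
  exact ⟨s, hs, t, hx.symm⟩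

theorem exists_lie_eq (h : IsStableComplement P S) {x : A} (hx : ⁅x, P⁆ ∈ S) :
    ∃ s ∈ S, ⁅s, P⁆ = ⁅x, P⁆ ∧ ∃ t, x = s + P * t := by
  obtain ⟨s, hs, t, rfl⟩ := h.exists_eq_add_mul x
  have hlie : ⁅s + P * t, P⁆ - ⁅s, P⁆ = P * ⁅t, P⁆ := by
    simp only [Ring.lie_def]
    noncomm_ring
  have hzero := h.eq_zero_of_eq_mul (sub_mem hx (h.lie_mem s hs)) hlie
  exact ⟨s, hs, (sub_eq_zero.1 hzero).symm, t, rfl⟩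

theorem map (h : IsStableComplement P S) (e : A ≃ₐ[R] B) : IsStableComplement (e P) (S.map e) where
  lie_mem := by
    rintro _ ⟨s, hs, rfl⟩
    have hlie : e ⁅s, P⁆ = ⁅e s, e P⁆ := by simp only [Ring.lie_def, map_sub, map_mul]
    exact ⟨⁅s, P⁆, h.lie_mem s hs, hlie⟩
  isCompl := by
    refine ⟨Submodule.disjoint_def.2 ?_, Submodule.codisjoint_iff_exists_add_eq.2 fun y => ?_⟩
    · rintro _ ⟨s, hs, rfl⟩ ⟨t, ht : e P * t = e s⟩
      have hst : s = P * e.symm t := e.injective (by rw [map_mul, e.apply_symm_apply, ht])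
      rw [h.eq_zero_of_eq_mul hs hst, map_zero]
    · obtain ⟨s, hs, t, hy⟩ := h.exists_eq_add_mul (e.symm y)
      refine ⟨e s, _, ⟨s, hs, rfl⟩, ⟨e t, rfl⟩, ?_⟩
      rw [LinearMap.mulLeft_apply, ← map_mul, ← map_add, ← hy, e.apply_symm_apply]

end IsStableComplement

end StableComplement

section MatrixUnits

open Matrix

variable {n : Type*} [Fintype n]

theorem exists_eq_smul_and_dotProduct_eq_one {R : Type*} [CommRing R] [IsDomain R] [IsBezout R]
    {w : n → R} (hw : w ≠ 0) : ∃ (d : R) (v u : n → R), d ≠ 0 ∧ w = d • v ∧ u ⬝ᵥ v = 1 := by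
  obtain ⟨d, hd : Ideal.span (Set.range w) = Ideal.span {d}⟩ :=
    IsBezout.isPrincipal_of_FG (Ideal.span (Set.range w)) (Submodule.fg_span (Set.finite_range w))
  have hdvd (i : n) : d ∣ w i :=
    Ideal.mem_span_singleton.1 (hd ▸ Ideal.subset_span (Set.mem_range_self i))
  choose v hv using hdvd
  have hwv : w = d • v := funext hv
  have hd0 : d ≠ 0 := by
    rintro rfl
    exact hw (by simpa using hwv)
  have hdmem : d ∈ Ideal.span (Set.range w) := hd ▸ Ideal.mem_span_singleton_self d
  obtain ⟨u, hu⟩ := Ideal.mem_span_range_iff_exists_fun.1 hdmem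
  have huw : u ⬝ᵥ w = d := hu
  refine ⟨d, v, u, hd0, hwv, mul_left_cancel₀ hd0 ?_⟩
  rw [mul_one, ← smul_eq_mul, ← dotProduct_smul, ← hwv, huw]

theorem exists_mulVec_eq_self_and_dotProduct_eq_one {R : Type*} [CommRing R] [IsDomain R]
    [IsBezout R] {E : Matrix n n R} (hE : IsIdempotentElem E) (hE0 : E ≠ 0) :
    ∃ v u : n → R, E *ᵥ v = v ∧ u ⬝ᵥ v = 1 := by
  obtain ⟨j, hj⟩ : ∃ j, E.col j ≠ 0 := by
    by_contra! hcol
    exact hE0 (Matrix.ext fun i j => congrFun (hcol j) i)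
  obtain ⟨d, v, u, hd, hwv, huv⟩ := exists_eq_smul_and_dotProduct_eq_one hj
  have hfix : E *ᵥ E.col j = E.col j := funext fun i => congrFun (congrFun hE i) j
  rw [hwv, mulVec_smul] at hfix
  exact ⟨v, u, smul_right_injective _ hd hfix, huv⟩

variable [DecidableEq n]

theorem exists_units_conj_single_eq {R : Type*} [CommRing R] [IsDomain R] [IsBezout R]
    {e : n → n → Matrix n n R} (he : ∀ i j l m, e i j * e l m = if j = l then e i m else 0)
    {o : n} (ho : e o o ≠ 0) :
    ∃ g : (Matrix n n R)ˣ, ∀ i j, g.1 * single i j 1 * g⁻¹.1 = e i j := by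
  obtain ⟨v, u, hv, huv⟩ :=
    exists_mulVec_eq_self_and_dotProduct_eq_one (E := e o o) (by simp [IsIdempotentElem, he]) ho
  let g : Matrix n n R := of fun r j => (e j o *ᵥ v) r
  let g' : Matrix n n R := of fun i r => (u ᵥ* e o i) r
  have entry (M : Matrix n n R) (a b : n) :
      (g' * M * g) a b = u ⬝ᵥ (e o a * M * e b o) *ᵥ v := by
    have : (g' * M * g) a b = (u ᵥ* e o a) ᵥ* M ⬝ᵥ e b o *ᵥ v := rfl
    simp only [this, dotProduct_mulVec, vecMul_vecMul, mul_assoc]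
  have inv_mul : g' * g = 1 := by
    ext a b
    rw [← mul_one g', entry, mul_one, he, one_apply]
    split_ifs <;> simp [hv, huv]
  have conj (i j : n) : g' * e i j * g = single i j 1 := by
    ext a b
    simp only [entry, he, ite_mul, zero_mul, single_apply, ← ite_and]
    split_ifs <;> simp_all
  have mul_inv : g * g' = 1 := mul_eq_one_comm.1 inv_mul
  refine ⟨⟨g, g', mul_inv, inv_mul⟩, fun i j => ?_⟩
  calc g * single i j 1 * g' = (g * g') * e i j * (g * g') := by
        simp only [← conj, mul_assoc]
    _ = e i j := by rw [mul_inv, one_mul, mul_one]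

theorem exists_units_conj_single_mem_of_isCompl_ker {F R : Type*} [CommRing F] [CommRing R]
    [IsDomain R] [IsBezout R] [Algebra F R] (ε : R →ₐ[F] F)
    (S : NonUnitalSubalgebra F (Matrix n n R))
    (hS : IsCompl S.toSubmodule (LinearMap.ker (ε.mapMatrix (m := n)).toLinearMap)) :
    ∃ g : (Matrix n n R)ˣ, ∀ i j, g.1 * single i j 1 * g⁻¹.1 ∈ S := by
  have eq_of_mapMatrix_eq {x y : Matrix n n R} (hx : x ∈ S) (hy : y ∈ S)
      (hxy : ε.mapMatrix x = ε.mapMatrix y) : x = y :=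
    sub_eq_zero.1 <| Submodule.disjoint_def.1 hS.disjoint (x - y) (sub_mem hx hy) <|
      show ε.mapMatrix (x - y) = 0 by rw [map_sub, hxy, sub_self]
  have lift_single (i j : n) : ∃ x ∈ S, ε.mapMatrix x = single i j 1 := by
    obtain ⟨x, y, hx, hy, hxy⟩ :=
      Submodule.codisjoint_iff_exists_add_eq.1 hS.codisjoint (single i j 1)
    have hεy : ε.mapMatrix y = 0 := hy
    refine ⟨x, hx, ?_⟩
    calc ε.mapMatrix x = ε.mapMatrix (x + y) := by rw [map_add, hεy, add_zero]
      _ = single i j 1 := by rw [hxy, AlgHom.mapMatrix_apply, map_single, map_one]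
  choose e heS hεe using lift_single
  have he (i j l m : n) : e i j * e l m = if j = l then e i m else 0 := by
    refine eq_of_mapMatrix_eq (mul_mem (heS i j) (heS l m)) ?_ ?_
    · split_ifs
      exacts [heS i m, zero_mem S]
    · split_ifs with hjl
      · rw [map_mul, hεe, hεe, hεe, hjl, single_mul_single_same, mul_one]
      · rw [map_mul, hεe, hεe, map_zero, single_mul_single_of_ne _ _ _ _ hjl]
  have : Nontrivial F := (algebraMap F R).domain_nontrivial
  obtain _ | ⟨⟨o⟩⟩ := isEmpty_or_nonempty n
  · exact ⟨1, isEmptyElim⟩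
  have ho : e o o ≠ 0 := by
    intro h
    simpa [h] using congrFun (congrFun (hεe o o) o) o
  obtain ⟨g, hg⟩ := exists_units_conj_single_eq he ho
  exact ⟨g, fun i j => hg i j ▸ heS i j⟩

theorem diagonal_apply_mem_of_single_mem {A T : Type*} [Semiring A] [SetLike T (Matrix n n A)]
    [NonUnitalSubsemiringClass T (Matrix n n A)] {S : T} (hS : ∀ i j, single i j 1 ∈ S)
    {x : Matrix n n A} (hx : x ∈ S) (i j : n) : diagonal (fun _ => x i j) ∈ S := by
  have hsum : ∑ l, single l i 1 * x * single j l 1 = diagonal fun _ => x i j := by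
    simp [sum_single_eq_diagonal]
  exact hsum ▸ sum_mem fun l _ => mul_mem (mul_mem (hS l i) hx) (hS j l)

theorem lie_diagonal_apply {A : Type*} [Ring A] (x : Matrix n n A) (c : A) (i j : n) :
    ⁅x, diagonal fun _ => c⁆ i j = ⁅x i j, c⁆ := by
  rw [Ring.lie_def, Ring.lie_def, Matrix.sub_apply, mul_diagonal, diagonal_mul]

theorem mul_aeval_mem {R A : Type*} [CommRing R] [Ring A] [Algebra R A]
    {S : NonUnitalSubalgebra R A} {x y : A} (hx : x ∈ S) (hy : y ∈ S) (b : R[X]) :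
    x * aeval y b ∈ S := by
  induction b using Polynomial.induction_on with
  | C r =>
    rw [aeval_C, ← Algebra.commutes, ← Algebra.smul_def]
    exact SMulMemClass.smul_mem r hx
  | add b c hb hc =>
    rw [map_add, mul_add]
    exact add_mem hb hc
  | monomial m r h =>
    rw [pow_succ, ← mul_assoc, map_mul, aeval_X, ← mul_assoc]
    exact mul_mem h hy

end MatrixUnits

section NormalOrder

attribute [local instance] LieRing.ofAssociativeRing

variable {R A : Type*} [CommRing R] [Ring A] [Algebra R A]

theorem commute_aeval_self (P : A) (a : R[X]) : Commute (aeval P a) P := by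
  simpa only [aeval_X] using (Commute.all a X).map (aeval P)

theorem lie_add_aeval_eq_one {P Q : A} (h : ⁅Q, P⁆ = 1) (g : R[X]) : ⁅Q + aeval P g, P⁆ = 1 := by
  rw [add_lie, h, commute_iff_lie_eq.1 (commute_aeval_self P g), add_zero]

theorem lie_pow_of_lie_eq_one {P Q : A} (h : ⁅Q, P⁆ = 1) (n : ℕ) :
    ⁅Q ^ n, P⁆ = n • Q ^ (n - 1) := by
  induction n with
  | zero => simp [Ring.lie_def]
  | succ n ih =>
    have hlie : ⁅Q ^ (n + 1), P⁆ = ⁅Q ^ n, P⁆ * Q + Q ^ n * ⁅Q, P⁆ := by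
      simp only [Ring.lie_def, pow_succ]
      noncomm_ring
    rw [hlie, ih, h, mul_one, Nat.add_sub_cancel, succ_nsmul, smul_mul_assoc]
    cases n <;> simp [pow_succ]

/-- The value at `P`, `Q` of a polynomial in two noncommuting variables written in normal order:
an element of `R[X][X]` has its inner variable evaluated at `P`, its outer variable at `Q`, and
powers of `P` stand to the left of powers of `Q`. -/
def normalOrder (P Q : A) : R[X][X] →ₗ[R] A :=
  Polynomial.lsum fun n => LinearMap.mulRight R (Q ^ n) ∘ₗ (aeval P).toLinearMap

theorem normalOrder_monomial (P Q : A) (n : ℕ) (a : R[X]) :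
    normalOrder P Q (monomial n a) = aeval P a * Q ^ n := by
  simp [normalOrder, lsum_apply, sum_monomial_index]

theorem normalOrder_C (P Q : A) (a : R[X]) : normalOrder P Q (C a) = aeval P a := by
  rw [← monomial_zero_left, normalOrder_monomial, pow_zero, mul_one]

theorem normalOrder_one (P Q : A) : normalOrder P Q (1 : R[X][X]) = 1 := by
  rw [← C_1, normalOrder_C, map_one]

theorem normalOrder_mul_X (P Q : A) (F : R[X][X]) :
    normalOrder P Q (F * X) = normalOrder P Q F * Q := by
  induction F using Polynomial.induction_on' with
  | add F G hF hG => simp only [add_mul, map_add, hF, hG]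
  | monomial n a =>
    rw [monomial_mul_X, normalOrder_monomial, normalOrder_monomial, pow_succ, mul_assoc]

theorem normalOrder_C_mul (P Q : A) (a : R[X]) (F : R[X][X]) :
    normalOrder P Q (C a * F) = aeval P a * normalOrder P Q F := by
  induction F using Polynomial.induction_on' with
  | add F G hF hG => simp only [mul_add, map_add, hF, hG]
  | monomial n b =>
    rw [C_mul_monomial, normalOrder_monomial, normalOrder_monomial, map_mul, mul_assoc]

theorem lie_normalOrder {P Q : A} (h : ⁅Q, P⁆ = 1) (F : R[X][X]) :
    ⁅normalOrder P Q F, P⁆ = normalOrder P Q (derivative F) := by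
  induction F using Polynomial.induction_on' with
  | add F G hF hG => rw [map_add, map_add, map_add, ← hF, ← hG, add_lie]
  | monomial n a =>
    calc ⁅normalOrder P Q (monomial n a), P⁆ = aeval P a * ⁅Q ^ n, P⁆ := by
          rw [normalOrder_monomial, Ring.lie_def, Ring.lie_def, mul_sub, ← mul_assoc P,
            ← (commute_aeval_self P a).eq, mul_assoc, mul_assoc]
      _ = normalOrder P Q (derivative (monomial n a)) := by
          rw [lie_pow_of_lie_eq_one h, derivative_monomial, normalOrder_monomial, map_mul,
            map_natCast, nsmul_eq_mul, mul_assoc]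

theorem normalOrder_mul_left_var {P Q : A} (h : ⁅Q, P⁆ = 1) (F : R[X][X]) :
    normalOrder P Q F * P = normalOrder P Q (C X * F + derivative F) := by
  rw [map_add, normalOrder_C_mul, aeval_X, ← lie_normalOrder h, Ring.lie_def, add_sub_cancel]

theorem exists_normalOrder_eq_aeval_add_mul (P Q : A) (F : R[X][X]) :
    ∃ (b : R[X]) (v : A), normalOrder P Q F = aeval Q b + P * v := by
  induction F using Polynomial.induction_on' with
  | add F G hF hG =>
    obtain ⟨⟨b, v, hF⟩, c, w, hG⟩ := And.intro hF hG
    exact ⟨b + c, v + w, by rw [map_add, hF, hG, map_add, mul_add, add_add_add_comm]⟩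
  | monomial n a =>
    refine ⟨monomial n (a.coeff 0), aeval P a.divX * Q ^ n, ?_⟩
    calc normalOrder P Q (monomial n a) = aeval P (X * a.divX + C (a.coeff 0)) * Q ^ n := by
          rw [normalOrder_monomial, X_mul_divX_add]
      _ = _ := by
          rw [map_add, map_mul, aeval_X, aeval_C, add_mul, mul_assoc, aeval_monomial, add_comm]

theorem normalOrder_surjective {P Q : A} (h : ⁅Q, P⁆ = 1)
    (hgen : Algebra.adjoin R ({P, Q} : Set A) = ⊤) :
    Function.Surjective (normalOrder (R := R) P Q) := by
  suffices hmul : ∀ (v : A) (F : R[X][X]), ∃ G, normalOrder P Q G = normalOrder P Q F * v from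
    fun v => by simpa only [normalOrder_one, one_mul] using hmul v 1
  intro v
  have hv : v ∈ Algebra.adjoin R {P, Q} := hgen ▸ Algebra.mem_top
  induction hv using Algebra.adjoin_induction with
  | mem v hv =>
    rcases hv with rfl | rfl
    · exact fun F => ⟨_, (normalOrder_mul_left_var h F).symm⟩
    · exact fun F => ⟨_, normalOrder_mul_X _ _ F⟩
  | algebraMap r =>
    exact fun F => ⟨r • F, by rw [map_smul, Algebra.smul_def, Algebra.commutes]⟩
  | add v w _ _ hv hw =>
    intro F
    obtain ⟨⟨G, hG⟩, H, hH⟩ := And.intro (hv F) (hw F)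
    exact ⟨G + H, by rw [map_add, hG, hH, mul_add]⟩
  | mul v w _ _ hv hw =>
    intro F
    obtain ⟨G, hG⟩ := hv F
    obtain ⟨H, hH⟩ := hw G
    exact ⟨H, by rw [hH, hG, mul_assoc]⟩

theorem normalOrder_injective [IsAddTorsionFree R[X]] {P Q : A} (h : ⁅Q, P⁆ = 1)
    (hP : Function.Injective (aeval P : R[X] →ₐ[R] A)) :
    Function.Injective (normalOrder (R := R) P Q) := by
  refine (injective_iff_map_eq_zero _).2 fun F hF => ?_
  induction hn : F.natDegree using Nat.strong_induction_on generalizing F with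
  | _ n ih =>
    have hF' : derivative F = 0 := by
      by_cases hn0 : n = 0
      · exact derivative_eq_zero.2 (hn.trans hn0)
      · refine ih _ (hn ▸ natDegree_derivative_lt (hn.trans_ne hn0)) _ ?_ rfl
        rw [← lie_normalOrder h, hF, zero_lie]
    rw [eq_C_of_derivative_eq_zero hF', normalOrder_C] at hF
    rw [eq_C_of_derivative_eq_zero hF', hP (hF.trans (map_zero _).symm), C_0]

end NormalOrder

/-- `A` is the first Weyl algebra over `R` with canonical generators `P` and `Q`: these satisfy
`QP - PQ = 1`, and the normally ordered monomials `P ^ i * Q ^ j` form a basis of `A`. -/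
structure IsWeylPair (R : Type*) {A : Type*} [CommRing R] [Ring A] [Algebra R A] (P Q : A) :
    Prop where
  lie_eq_one : ⁅Q, P⁆ = 1
  normalOrder_bijective : Function.Bijective (normalOrder (R := R) P Q)

namespace IsWeylPair

attribute [local instance] LieRing.ofAssociativeRing

variable {R A B : Type*} [CommRing R] [Ring A] [Algebra R A] [Ring B] [Algebra R B]
  {P Q : A} {P' Q' : B}

theorem exists_eq_aeval_add_mul (h : IsWeylPair R P Q) (w : A) :
    ∃ (b : R[X]) (v : A), w = aeval Q b + P * v := by
  obtain ⟨F, rfl⟩ := h.normalOrder_bijective.surjective w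
  exact exists_normalOrder_eq_aeval_add_mul P Q F

theorem aeval_injective (h : IsWeylPair R P Q) : Function.Injective (aeval P : R[X] →ₐ[R] A) :=
  fun a b hab => C_injective <| h.normalOrder_bijective.injective <| by
    rw [normalOrder_C, normalOrder_C, hab]

theorem coeff_zero_eq_zero_of_aeval_eq_mul (h : IsWeylPair R P Q) {a : R[X]} {w : A}
    (ha : aeval P a = P * w) : a.coeff 0 = 0 := by
  obtain ⟨F, rfl⟩ := h.normalOrder_bijective.surjective w
  have haF : C a = C X * F := h.normalOrder_bijective.injective <| by
    rw [normalOrder_C, normalOrder_C_mul, aeval_X, ha]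
  have hcoeff : a = X * F.coeff 0 := by
    simpa only [coeff_C_zero, coeff_C_mul] using congrArg (coeff · 0) haF
  rw [hcoeff, coeff_X_mul_zero]

theorem exists_eq_aeval_of_lie_eq_zero [IsAddTorsionFree R[X]] (h : IsWeylPair R P Q) {w : A}
    (hw : ⁅w, P⁆ = 0) : ∃ a : R[X], w = aeval P a := by
  obtain ⟨F, rfl⟩ := h.normalOrder_bijective.surjective w
  have hF : derivative F = 0 := h.normalOrder_bijective.injective <| by
    rw [← lie_normalOrder h.lie_eq_one, hw, map_zero]
  exact ⟨F.coeff 0, by rw [← normalOrder_C P Q, ← eq_C_of_derivative_eq_zero hF]⟩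

/-- The linear map underlying `IsWeylPair.lift`, which evaluates normal forms at `P'` and `Q'`. -/
def liftLinear (h : IsWeylPair R P Q) (P' Q' : B) : A →ₗ[R] B :=
  normalOrder P' Q' ∘ₗ (LinearEquiv.ofBijective _ h.normalOrder_bijective).symm.toLinearMap

theorem liftLinear_normalOrder (h : IsWeylPair R P Q) (P' Q' : B) (F : R[X][X]) :
    h.liftLinear P' Q' (normalOrder P Q F) = normalOrder P' Q' F :=
  congrArg (normalOrder P' Q')
    ((LinearEquiv.ofBijective _ h.normalOrder_bijective).symm_apply_apply F)

theorem liftLinear_one (h : IsWeylPair R P Q) (P' Q' : B) : h.liftLinear P' Q' 1 = 1 := by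
  rw [← normalOrder_one (R := R) P Q, liftLinear_normalOrder, normalOrder_one]

theorem liftLinear_mul_left_var (h : IsWeylPair R P Q) (h' : ⁅Q', P'⁆ = 1) (w : A) :
    h.liftLinear P' Q' (w * P) = h.liftLinear P' Q' w * P' := by
  obtain ⟨F, rfl⟩ := h.normalOrder_bijective.surjective w
  rw [normalOrder_mul_left_var h.lie_eq_one, liftLinear_normalOrder, liftLinear_normalOrder,
    normalOrder_mul_left_var h']

theorem liftLinear_mul_right_var (h : IsWeylPair R P Q) (P' Q' : B) (w : A) :
    h.liftLinear P' Q' (w * Q) = h.liftLinear P' Q' w * Q' := by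
  obtain ⟨F, rfl⟩ := h.normalOrder_bijective.surjective w
  rw [← normalOrder_mul_X, liftLinear_normalOrder, liftLinear_normalOrder, normalOrder_mul_X]

theorem liftLinear_left (h : IsWeylPair R P Q) (h' : ⁅Q', P'⁆ = 1) : h.liftLinear P' Q' P = P' := by
  simpa only [one_mul, liftLinear_one] using h.liftLinear_mul_left_var h' 1

theorem liftLinear_right (h : IsWeylPair R P Q) (P' Q' : B) : h.liftLinear P' Q' Q = Q' := by
  simpa only [one_mul, liftLinear_one] using h.liftLinear_mul_right_var P' Q' 1

theorem adjoin_eq_top (h : IsWeylPair R P Q) : Algebra.adjoin R ({P, Q} : Set A) = ⊤ := by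
  refine eq_top_iff.2 fun w _ => ?_
  obtain ⟨F, rfl⟩ := h.normalOrder_bijective.surjective w
  have hQ : Q ∈ Algebra.adjoin R {P, Q} := Algebra.subset_adjoin (Set.mem_insert_of_mem _ rfl)
  induction F using Polynomial.induction_on' with
  | add F G hF hG =>
    rw [map_add]
    exact add_mem (hF trivial) (hG trivial)
  | monomial n a =>
    rw [normalOrder_monomial]
    exact mul_mem (Algebra.adjoin_mono (Set.singleton_subset_iff.2 (Set.mem_insert P {Q}))
      (aeval_mem_adjoin_singleton R P)) (pow_mem hQ n)

theorem liftLinear_mul (h : IsWeylPair R P Q) (h' : ⁅Q', P'⁆ = 1) (w v : A) :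
    h.liftLinear P' Q' (w * v) = h.liftLinear P' Q' w * h.liftLinear P' Q' v := by
  have hv : v ∈ Algebra.adjoin R {P, Q} := h.adjoin_eq_top ▸ Algebra.mem_top
  induction hv using Algebra.adjoin_induction generalizing w with
  | mem v hv =>
    rcases hv with hv | hv <;> rw [hv]
    · rw [h.liftLinear_mul_left_var h', h.liftLinear_left h']
    · rw [liftLinear_mul_right_var, liftLinear_right]
  | algebraMap r =>
    rw [← Algebra.commutes, ← Algebra.smul_def, map_smul, Algebra.algebraMap_eq_smul_one, map_smul,
      liftLinear_one, mul_smul_comm, mul_one]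
  | add v v' _ _ hv hv' => rw [mul_add, map_add, hv, hv', map_add, mul_add]
  | mul v v' _ _ hv hv' => rw [← mul_assoc, hv', hv, hv', mul_assoc]

/-- The universal property of the Weyl algebra: the homomorphism with `P ↦ P'` and `Q ↦ Q'`. -/
def lift (h : IsWeylPair R P Q) (h' : ⁅Q', P'⁆ = 1) : A →ₐ[R] B :=
  AlgHom.ofLinearMap (h.liftLinear P' Q') (h.liftLinear_one P' Q') (h.liftLinear_mul h')

theorem lift_left (h : IsWeylPair R P Q) (h' : ⁅Q', P'⁆ = 1) : h.lift h' P = P' :=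
  h.liftLinear_left h'

theorem lift_right (h : IsWeylPair R P Q) (h' : ⁅Q', P'⁆ = 1) : h.lift h' Q = Q' :=
  h.liftLinear_right P' Q'

/-- The endomorphism `P ↦ P`, `Q ↦ Q + g(P)` of the Weyl algebra. -/
def shear (h : IsWeylPair R P Q) (g : R[X]) : A →ₐ[R] A :=
  h.lift (lie_add_aeval_eq_one h.lie_eq_one g)

theorem shear_left (h : IsWeylPair R P Q) (g : R[X]) : h.shear g P = P := h.lift_left _

theorem shear_right (h : IsWeylPair R P Q) (g : R[X]) : h.shear g Q = Q + aeval P g :=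
  h.lift_right _

theorem shear_comp_shear_neg (h : IsWeylPair R P Q) (g : R[X]) :
    (h.shear g).comp (h.shear (-g)) = AlgHom.id R A := by
  refine AlgHom.ext_of_adjoin_eq_top h.adjoin_eq_top ?_
  rintro _ (rfl | rfl)
  · simp only [AlgHom.comp_apply, shear_left, AlgHom.id_apply]
  · rw [AlgHom.comp_apply, shear_right, map_add, shear_right, ← aeval_algHom_apply, shear_left,
      map_neg, add_neg_cancel_right, AlgHom.id_apply]

theorem exists_algEquiv_of_lie_eq_one [IsAddTorsionFree R[X]] (h : IsWeylPair R P Q) {c : A}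
    (hc : ⁅c, P⁆ = 1) : ∃ f : A ≃ₐ[R] A, f P = P ∧ f Q = c := by
  have hlie : ⁅c - Q, P⁆ = 0 := by rw [sub_lie, hc, h.lie_eq_one, sub_self]
  obtain ⟨g, hg⟩ := h.exists_eq_aeval_of_lie_eq_zero hlie
  refine ⟨AlgEquiv.ofAlgHom (h.shear g) (h.shear (-g)) (h.shear_comp_shear_neg g) ?_,
    h.shear_left g, ?_⟩
  · simpa only [neg_neg] using h.shear_comp_shear_neg (-g)
  · exact (h.shear_right g).trans (by rw [← hg, add_sub_cancel])

end IsWeylPair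

section Concrete

variable {K : Type*} [Field K]

theorem lie_qW_pW : ⁅qW K, pW K⁆ = 1 :=
  Subtype.ext <| LinearMap.ext fun f => by simp [Ring.lie_def, qW, pW, qOp, pOp]

theorem aeval_pW_apply (a f : K[X]) : (aeval (pW K) a : Module.End K K[X]) f = a * f := by
  have h : (WeylA K).val.comp (aeval (pW K)) = Algebra.lmul K K[X] :=
    Polynomial.algHom_ext (by rw [AlgHom.comp_apply, aeval_X]; rfl)
  exact LinearMap.congr_fun (DFunLike.congr_fun h a) f

theorem aeval_pW_injective : Function.Injective (aeval (pW K) : K[X] →ₐ[K] WeylA K) :=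
  fun a b hab => by
    simpa only [aeval_pW_apply, mul_one] using
      congrArg (fun w : WeylA K => (w : Module.End K K[X]) 1) hab

theorem adjoin_pW_qW : Algebra.adjoin K ({pW K, qW K} : Set (WeylA K)) = ⊤ := by
  have h : ({pW K, qW K} : Set (WeylA K)) = Subtype.val ⁻¹' {pOp K, qOp K} := by
    ext w
    simp [Subtype.ext_iff, pW, qW]
  rw [h]
  exact Algebra.adjoin_adjoin_coe_preimage

theorem isWeylPair_pW_qW [CharZero K] : IsWeylPair K (pW K) (qW K) where
  lie_eq_one := lie_qW_pW
  normalOrder_bijective := ⟨normalOrder_injective lie_qW_pW aeval_pW_injective,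
    normalOrder_surjective lie_qW_pW adjoin_pW_qW⟩

end Concrete

section StableMatrixComplement

open Matrix

variable {R A n : Type*} [CommRing R] [Ring A] [Algebra R A] [Fintype n] [DecidableEq n]
  {p q : A} {S : NonUnitalSubalgebra R (Matrix n n A)}

theorem commute_scalar_mapMatrix_aeval (p : A) (F : Matrix n n R[X]) :
    Commute (scalar n p) ((aeval p).mapMatrix F) := by
  have hX : (aeval p : R[X] →ₐ[R] A).mapMatrix (scalar n X) = scalar n p := by
    simp [diagonal_map]
  exact hX ▸ (scalar_commute X (Commute.all X) F).map (aeval p).mapMatrix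

theorem mapMatrix_aeval_eq_scalar_mul (p : A) {F : Matrix n n R[X]}
    (hF : (aeval (0 : R)).mapMatrix F = 0) :
    (aeval p).mapMatrix F = scalar n p * (aeval p).mapMatrix (F.map divX) := by
  ext i j
  have hij : (F i j).coeff 0 = 0 := by
    rw [coeff_zero_eq_aeval_zero]
    exact congrFun (congrFun hF i) j
  have hX : X * (F i j).divX = F i j := by
    simpa only [hij, C_0, add_zero] using X_mul_divX_add (F i j)
  calc aeval p (F i j) = p * aeval p (F i j).divX := by rw [← hX, map_mul, aeval_X, hX]
    _ = _ := by rw [scalar_apply, diagonal_mul]; rfl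

theorem map_aeval_mem_of_single_mem (hsingle : ∀ i j, single i j 1 ∈ S)
    (hq : scalar n q ∈ S) (B : Matrix n n R[X]) : B.map (aeval q) ∈ S := by
  have hdiag (b : R[X]) : aeval (scalar n q) b = scalar n (aeval q b) :=
    aeval_algHom_apply (scalarAlgHom n R) q b
  have hmul (i j : n) (b : R[X]) :
      single i j 1 * aeval (scalar n q) b = single i j (aeval q b) := by
    ext r c
    rw [hdiag, scalar_apply, mul_diagonal]
    simp [single_apply]
  rw [matrix_eq_sum_single (B.map (aeval q))]
  exact sum_mem fun i _ => sum_mem fun j _ => hmul i j (B i j) ▸ mul_aeval_mem (hsingle i j) hq _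

namespace IsStableComplement

theorem isCompl_comap_mapMatrix_aeval_ker [IsAddTorsionFree R[X]] (hpq : IsWeylPair R p q)
    (hS : IsStableComplement (scalar n p) S) :
    IsCompl (S.comap (aeval p).mapMatrix).toSubmodule
      (LinearMap.ker ((aeval (0 : R)).mapMatrix (m := n)).toLinearMap) := by
  refine ⟨Submodule.disjoint_def.2 fun F hF hF0 => ?_,
    Submodule.codisjoint_iff_exists_add_eq.2 fun F => ?_⟩
  · refine Matrix.map_injective hpq.aeval_injective ?_
    exact (hS.eq_zero_of_eq_mul hF (mapMatrix_aeval_eq_scalar_mul p hF0)).trans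
      (map_zero (aeval p).mapMatrix).symm
  · have hF : ⁅(aeval p).mapMatrix F, scalar n p⁆ = 0 :=
      sub_eq_zero.2 (commute_scalar_mapMatrix_aeval p F).symm
    obtain ⟨s, hs, hlie, t, hst⟩ := hS.exists_lie_eq (hF ▸ zero_mem S)
    have hentry (i j : n) : ∃ a : R[X], s i j = aeval p a := by
      refine hpq.exists_eq_aeval_of_lie_eq_zero ?_
      exact (lie_diagonal_apply s p i j).symm.trans (congrFun (congrFun (hlie.trans hF) i) j)
    choose F' hF' using hentry
    have hs' : (aeval p).mapMatrix (of F') = s := Matrix.ext fun i j => (hF' i j).symm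
    have hF'S : (aeval p).mapMatrix (of F') ∈ S := hs' ▸ hs
    refine ⟨of F', F - of F', hF'S, ?_, add_sub_cancel _ _⟩
    ext i j
    have hij : aeval p (F i j) = s i j + p * t i j := by
      simpa using congrFun (congrFun hst i) j
    refine (coeff_zero_eq_aeval_zero _).symm.trans
      (hpq.coeff_zero_eq_zero_of_aeval_eq_mul (w := t i j) ?_)
    rw [Matrix.sub_apply, map_sub, hij, of_apply, ← hF', add_sub_cancel_left]

theorem exists_algEquiv_scalar_mem [IsAddTorsionFree R[X]] (hpq : IsWeylPair R p q)
    (hS : IsStableComplement (scalar n p) S) (hsingle : ∀ i j, single i j 1 ∈ S) :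
    ∃ φ : Matrix n n A ≃ₐ[R] Matrix n n A, φ (scalar n p) = scalar n p ∧
      (∀ i j, single i j 1 ∈ S.map φ) ∧ scalar n q ∈ S.map φ := by
  obtain _ | ⟨⟨o⟩⟩ := isEmpty_or_nonempty n
  · exact ⟨.refl, rfl, isEmptyElim, Subsingleton.elim 0 (scalar n q) ▸ zero_mem _⟩
  have hlie : ⁅scalar n q, scalar n p⁆ = 1 := by
    rw [Ring.lie_def, ← map_mul, ← map_mul, ← map_sub, ← Ring.lie_def, hpq.lie_eq_one, map_one]
  have hone : (1 : Matrix n n A) ∈ S := sum_single_one (m := n) (α := A) ▸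
    sum_mem fun i _ => hsingle i i
  obtain ⟨s, hs, hslie, -⟩ := hS.exists_lie_eq (hlie ▸ hone)
  have hc : ⁅s o o, p⁆ = 1 := calc
    ⁅s o o, p⁆ = ⁅s, scalar n p⁆ o o := (lie_diagonal_apply s p o o).symm
    _ = 1 := by rw [hslie, hlie, one_apply_eq]
  obtain ⟨f, hfp, hfq⟩ := hpq.exists_algEquiv_of_lie_eq_one hc
  have hscalar (a : A) : f.symm.mapMatrix (scalar n (f a)) = scalar n a := by
    simp [diagonal_map]
  refine ⟨f.symm.mapMatrix, by simpa only [hfp] using hscalar p, fun i j => ⟨_, hsingle i j, ?_⟩,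
    ⟨_, diagonal_apply_mem_of_single_mem hsingle hs o o, ?_⟩⟩
  · exact (map_single i j 1 f.symm).trans (by rw [map_one])
  · exact hfq ▸ hscalar q

theorem coe_eq_map_aeval (hpq : IsWeylPair R p q) (hS : IsStableComplement (scalar n p) S)
    (hsingle : ∀ i j, single i j 1 ∈ S) (hq : scalar n q ∈ S) :
    (S : Set (Matrix n n A)) = {x | ∃ B : Matrix n n R[X], x = B.map (aeval q)} := by
  ext x
  refine ⟨fun hx => ?_, ?_⟩
  · choose B V hBV using fun i j => hpq.exists_eq_aeval_add_mul (x i j)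
    have hxB : x - (of B).map (aeval q) = scalar n p * of V := by
      ext i j
      simp [hBV]
    exact ⟨of B, sub_eq_zero.1 <|
      hS.eq_zero_of_eq_mul (sub_mem hx (map_aeval_mem_of_single_mem hsingle hq _)) hxB⟩
  · rintro ⟨B, rfl⟩
    exact map_aeval_mem_of_single_mem hsingle hq B

end IsStableComplement

end StableMatrixComplement

section Field

open Matrix

variable {K A n : Type*} [Field K] [CharZero K] [Ring A] [Algebra K A] [Fintype n] [DecidableEq n]
  {p q : A} {S : NonUnitalSubalgebra K (Matrix n n A)}

theorem IsStableComplement.exists_algEquiv_single_mem (hpq : IsWeylPair K p q)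
    (hS : IsStableComplement (scalar n p) S) :
    ∃ γ : Matrix n n A ≃ₐ[K] Matrix n n A, γ (scalar n p) = scalar n p ∧
      ∀ i j, single i j 1 ∈ S.map γ := by
  obtain ⟨g, hg⟩ := exists_units_conj_single_mem_of_isCompl_ker _ _
    (hS.isCompl_comap_mapMatrix_aeval_ker hpq)
  let G : (Matrix n n A)ˣ := Units.map (aeval p).mapMatrix.toMonoidHom g
  let γ : Matrix n n A ≃ₐ[K] Matrix n n A :=
    MulSemiringAction.toAlgEquiv K _ (ConjAct.toConjAct G⁻¹)
  have hγ (x : Matrix n n A) : γ x = G⁻¹.1 * x * G.1 := ConjAct.units_smul_def _ x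
  refine ⟨γ, ?_, fun i j => ⟨_, hg i j, ?_⟩⟩
  · have hG : Commute (scalar n p) G.1 := commute_scalar_mapMatrix_aeval p g.1
    rw [hγ, mul_assoc, hG.eq, G.inv_mul_cancel_left]
  · have hsingle : (aeval p : K[X] →ₐ[K] A).mapMatrix (single i j 1) = single i j 1 := by
      rw [AlgHom.mapMatrix_apply, map_single, map_one]
    calc γ ((aeval p).mapMatrix (g.1 * single i j 1 * g⁻¹.1))
        = G⁻¹.1 * (G.1 * single i j 1 * G⁻¹.1) * G.1 := by
          rw [hγ, map_mul, map_mul, hsingle]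
          rfl
      _ = single i j 1 := by
          rw [mul_assoc, mul_assoc, G.inv_mul, mul_one, G.inv_mul_cancel_left]

theorem direct_sum_decomposition_conjugate_to_current_general
    (hpq : IsWeylPair K p q) (hS : IsStableComplement (scalar n p) S) :
    ∃ θ : Matrix n n A ≃ₐ[K] Matrix n n A,
      (∀ a, θ ⁅a, scalar n p⁆ = ⁅θ a, scalar n p⁆) ∧
      θ (scalar n p) = scalar n p ∧
      θ '' S = {x | ∃ B : Matrix n n K[X], x = B.map (aeval q)} := by
  obtain ⟨γ, hγp, hγ⟩ := hS.exists_algEquiv_single_mem hpq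
  have hγS : IsStableComplement (scalar n p) (S.map γ) := hγp ▸ hS.map γ
  obtain ⟨φ, hφp, hφ, hφq⟩ := hγS.exists_algEquiv_scalar_mem hpq hγ
  have hφS : IsStableComplement (scalar n p) ((S.map γ).map φ) := hφp ▸ hγS.map φ
  have hp : (γ.trans φ) (scalar n p) = scalar n p := by rw [AlgEquiv.trans_apply, hγp, hφp]
  refine ⟨γ.trans φ, fun a => ?_, hp, ?_⟩
  · rw [Ring.lie_def, Ring.lie_def, map_sub, map_mul, map_mul, hp]
  · rw [← hφS.coe_eq_map_aeval hpq hφ hφq]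
    exact Set.image_comp φ γ S

end Field

/-- Proposition 4.2.4: if `S ⊆ M_N(W)` is a `∂_q`-invariant subalgebra with
`M_N(W) = ⊕_{n≥0} p^n·S`, then some `∂_q`-invariant automorphism `θ` of
`M_N(W)` fixes `p` and carries `S` onto `M_N(k[q])`. -/
theorem direct_sum_decomposition_conjugate_to_current [IsAlgClosed k] (N : ℕ) (hN : 0 < N)
    (S : NonUnitalSubalgebra k (MW k N))
    (hdq : ∀ a ∈ S, dq k N a ∈ S)
    (hex : ∀ x : MW k N, ∃ (m : ℕ) (s : ℕ → MW k N), (∀ i, s i ∈ S) ∧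
      x = ∑ i ∈ Finset.range (m + 1), pM k N ^ i * s i)
    (huniq : ∀ (m : ℕ) (s : ℕ → MW k N), (∀ i, s i ∈ S) →
      ∑ i ∈ Finset.range (m + 1), pM k N ^ i * s i = 0 →
      ∀ i ∈ Finset.range (m + 1), s i = 0) :
    ∃ θ : MW k N ≃ₐ[k] MW k N,
      (∀ a : MW k N, θ (dq k N a) = dq k N (θ a)) ∧
      θ (pM k N) = pM k N ∧
      θ '' (S : Set (MW k N)) =
        {x : MW k N | ∃ B : Matrix (Fin N) (Fin N) (Polynomial k), x = B.map (polyQ k)} :=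
  direct_sum_decomposition_conjugate_to_current_general isWeylPair_pW_qW
    ⟨hdq, isCompl_range_mulLeft_of_pow_decomposition (pM k N) S.toSubmodule hex huniq⟩

end
end

section
/- Let A be an associative algebra with a locally nilpotent derivation ∂ over a field of characteristic zero. The map φ: H ⊗ A → H ⊗ A given by h ⊗ a ↦ Σ_{s≥0} D^{(s)}h ⊗ ∂^s(a) is a bijective H-linear map with inverse h ⊗ a ↦ Σ_{s≥0} (-D)^{(s)}h ⊗ ∂^s(a), and it intertwines the products a ∘_n b = a·∂^n(b) of Diff A with the products a ∘_(n) b = Σ_{s≥0} D^{(s)} ⊗ ∂^{n+s}(a)·b of Diff° A; i.e., Diff A ≅ Diff° A as conformal algebras. -/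
open Polynomial Finset

noncomputable section

variable (k : Type*) [Field k] [CharZero k]
variable (A : Type*) [Ring A] [Algebra k A]

/-- The conformal product of `Diff A` on `H ⊗ A ≅ A[D]`: determined on `A` by
`a ∘_n b = a·∂^n(b)` and extended by sesquilinearity. -/
def nmulD (d : A →ₗ[k] A) (x y : Polynomial A) (n : ℕ) : Polynomial A :=
  ∑ s ∈ Finset.range (x.natDegree + 1), ∑ t ∈ Finset.range (y.natDegree + 1),
    ∑ j ∈ Finset.range (t + 1),
      if s + j ≤ n then
        (((-1 : ℤ) ^ s * (t.choose j : ℤ) * (n.descFactorial (s + j) : ℤ)) •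
          ((Polynomial.X : Polynomial A) ^ (t - j) *
            Polynomial.C (x.coeff s * (⇑d)^[n - s - j] (y.coeff t))))
      else 0

/-- The conformal product of `Diff° A` on `H ⊗ A ≅ A[D]`: determined on `A` by
`a ∘_(n) b = Σ_s D^{(s)} ⊗ ∂^{n+s}(a)·b` and extended by sesquilinearity;
`M` is any bound with `∂^[M]` killing all coefficients of `x`. -/
def nmulCirc (d : A →ₗ[k] A) (x y : Polynomial A) (n M : ℕ) : Polynomial A :=
  ∑ u ∈ Finset.range (x.natDegree + 1), ∑ t ∈ Finset.range (y.natDegree + 1),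
    ∑ m ∈ Finset.range M,
      if u ≤ n then
        (((-1 : k) ^ u * (Nat.factorial n : k) * ((Nat.factorial m : k))⁻¹ *
            ((t + m).choose (n - u) : k)) •
          ((Polynomial.X : Polynomial A) ^ (t + m - (n - u)) *
            Polynomial.C ((⇑d)^[m] (x.coeff u) * y.coeff t)))
      else 0

/-!
For a locally nilpotent derivation `∂` and a central element `p`, `e^{p∂}` is an algebra
homomorphism, and `e^{p∂} e^{q∂} = e^{(p+q)∂}`. Identify `H ⊗ A` with `A[D]`. Then `φ` is the
algebra endomorphism of `A[D]` that fixes `D` and is `e^{D∂}` on `A`, and `e^{-D∂}` gives its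
inverse.

The products of all orders are the coefficients of the `λ`-product `∑ₙ λ^n / n! (x ∘_n y)` in
`A[D][λ]`. For `x = f(D)a` and `y = g(D)b` it is `f(-λ) a · g(D+λ) e^{λ∂} b` in `Diff A` and
`f(-λ) (e^{(D+λ)∂} a) · g(D+λ) b` in `Diff° A`. Both factors are algebra homomorphisms, of `x` and
of `y` respectively, so `φ` has to be compared with them on `A` and on `D` only, where the claim is
`e^{D∂} = e^{-λ∂} e^{(D+λ)∂}` for the left factors and `e^{λ∂} e^{D∂} = e^{(D+λ)∂}` for the right
ones.
-/

theorem iterate_apply_eq_zero_of_le {K M : Type*} [Semiring K] [AddCommMonoid M] [Module K M]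
    {d : M →ₗ[K] M} {a : M} {m n : ℕ} (hmn : m ≤ n) (h : d^[m] a = 0) : d^[n] a = 0 := by
  rw [← Module.End.pow_apply] at h ⊢
  exact Module.End.pow_map_zero_of_le hmn h

theorem iterate_neg_apply {K M : Type*} [Ring K] [AddCommGroup M] [Module K M]
    (d : M →ₗ[K] M) (n : ℕ) (a : M) : (-d)^[n] a = (-1 : K) ^ n • d^[n] a := by
  induction n with
  | zero => simp
  | succ n ih =>
    rw [Function.iterate_succ_apply', ih, map_smul, Function.iterate_succ_apply', pow_succ]
    simp

theorem neg_pow_eq_zsmul {S : Type*} [Ring S] (a : S) (n : ℕ) :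
    (-a) ^ n = (-1 : ℤ) ^ n • a ^ n := by
  rw [neg_pow, zsmul_eq_mul, Int.cast_pow, Int.cast_neg, Int.cast_one]

section Leibniz

variable {K R : Type*}

theorem iterate_map_mul_of_leibniz [CommSemiring K] [Semiring R] [Algebra K R] {d : R →ₗ[K] R}
    (hd : ∀ a b : R, d (a * b) = d a * b + a * d b) (n : ℕ) (a b : R) :
    d^[n] (a * b) = ∑ p ∈ antidiagonal n, n.choose p.1 • (d^[p.1] a * d^[p.2] b) := by
  induction n with
  | zero => simp
  | succ n ih =>
    rw [sum_antidiagonal_choose_succ_nsmul fun i j => d^[i] a * d^[j] b,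
      Function.iterate_succ_apply', ih, map_sum, ← sum_add_distrib]
    refine sum_congr rfl fun p hp => ?_
    rw [map_nsmul, hd, Function.iterate_succ_apply', Function.iterate_succ_apply',
      nsmul_add, add_comm, Nat.choose_symm_of_eq_add (mem_antidiagonal.1 hp).symm]

theorem inv_factorial_smul_iterate_map_mul_of_leibniz [Field K] [CharZero K] [Semiring R]
    [Algebra K R] {d : R →ₗ[K] R} (hd : ∀ a b : R, d (a * b) = d a * b + a * d b)
    (n : ℕ) (a b : R) :
    (n.factorial : K)⁻¹ • d^[n] (a * b) = ∑ p ∈ antidiagonal n,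
      ((p.1.factorial : K)⁻¹ • d^[p.1] a) * ((p.2.factorial : K)⁻¹ • d^[p.2] b) := by
  rw [iterate_map_mul_of_leibniz hd, smul_sum]
  refine sum_congr rfl fun p hp => ?_
  obtain rfl := mem_antidiagonal.1 hp
  rw [smul_mul_smul_comm, ← Nat.cast_smul_eq_nsmul K, smul_smul, Nat.cast_add_choose]
  congr 1
  have := Nat.factorial_ne_zero (p.1 + p.2)
  field_simp

theorem map_one_eq_zero_of_leibniz [CommSemiring K] [Ring R] [Algebra K R] {d : R →ₗ[K] R}
    (hd : ∀ a b : R, d (a * b) = d a * b + a * d b) : d 1 = 0 := by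
  simpa using hd 1 1

end Leibniz

section CentralEvaluation

variable {K R B : Type*} [CommSemiring K] [Semiring R] [Algebra K R] [Semiring B] [Algebra K B]

/-- Evaluation of polynomials at a central element `p`, with coefficients mapped by `f`. -/
def evalCentral (f : R →ₐ[K] B) (p : Subalgebra.center K B) : R[X] →ₐ[K] B :=
  eval₂AlgHom f p fun a => Subalgebra.mem_center_iff.1 p.2 (f a)

@[simp]
theorem evalCentral_C (f : R →ₐ[K] B) (p : Subalgebra.center K B) (a : R) :
    evalCentral f p (C a) = f a :=
  eval₂_C _ _

@[simp]
theorem evalCentral_X (f : R →ₐ[K] B) (p : Subalgebra.center K B) : evalCentral f p X = p :=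
  eval₂_X _ _

theorem evalCentral_monomial (f : R →ₐ[K] B) (p : Subalgebra.center K B) (s : ℕ) (a : R) :
    evalCentral f p (monomial s a) = f a * (p : B) ^ s :=
  eval₂_monomial _ _

theorem evalCentral_eq_sum_range (f : R →ₐ[K] B) (p : Subalgebra.center K B) (x : R[X]) :
    evalCentral f p x = ∑ s ∈ range (x.natDegree + 1), f (x.coeff s) * (p : B) ^ s :=
  eval₂_eq_sum_range _ _

theorem X_mem_center : (X : R[X]) ∈ Subalgebra.center K R[X] :=
  Subalgebra.mem_center_iff.2 fun x => (X_mul (p := x)).symm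

theorem C_mem_center {a : R} (ha : a ∈ Subalgebra.center K R) :
    C a ∈ Subalgebra.center K R[X] := by
  refine Subalgebra.mem_center_iff.2 fun x => ?_
  ext n
  rw [coeff_mul_C, coeff_C_mul, Subalgebra.mem_center_iff.1 ha]

end CentralEvaluation

/-- A locally nilpotent derivation of an associative algebra, as a property of a linear map:
Mathlib's `Derivation` asks for a commutative algebra. -/
structure IsLocallyNilpotentDerivation {K R : Type*} [CommSemiring K] [Semiring R] [Algebra K R]
    (d : R →ₗ[K] R) : Prop where
  leibniz : ∀ a b : R, d (a * b) = d a * b + a * d b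
  exists_iterate_eq_zero : ∀ a : R, ∃ n : ℕ, d^[n] a = 0

namespace IsLocallyNilpotentDerivation

theorem neg {K R : Type*} [CommRing K] [Ring R] [Algebra K R] {d : R →ₗ[K] R}
    (hd : IsLocallyNilpotentDerivation d) : IsLocallyNilpotentDerivation (-d) where
  leibniz a b := by simp [hd.leibniz, add_comm]
  exists_iterate_eq_zero a := by
    obtain ⟨n, hn⟩ := hd.exists_iterate_eq_zero a
    exact ⟨n, by rw [iterate_neg_apply, hn, smul_zero]⟩

section Exponential

variable {K R B : Type*} [Field K] [Ring R] [Algebra K R] [Ring B] [Algebra K B]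
  {d : R →ₗ[K] R} (hd : IsLocallyNilpotentDerivation d)

/-- The polynomial `e^{X∂} a = ∑ₛ X^s ∂^s(a) / s!`. The sum stops at some `n` with `∂^n(a) = 0`;
its value does not depend on which one, see `coeff_expPolynomial`. -/
def expPolynomial (a : R) : R[X] :=
  ∑ s ∈ range (hd.exists_iterate_eq_zero a).choose,
    monomial s ((s.factorial : K)⁻¹ • d^[s] a)

theorem coeff_expPolynomial (a : R) (s : ℕ) :
    (hd.expPolynomial a).coeff s = (s.factorial : K)⁻¹ • d^[s] a := by
  simp only [expPolynomial, finsetSum_coeff, coeff_monomial, sum_ite_eq', mem_range]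
  split_ifs with hs
  · rfl
  · rw [iterate_apply_eq_zero_of_le (not_lt.1 hs) (hd.exists_iterate_eq_zero a).choose_spec,
      smul_zero]

variable [CharZero K]

/-- The exponential `a ↦ e^{X∂} a` of a locally nilpotent derivation `∂`, an algebra homomorphism
because `∂` is a derivation. -/
def exp : R →ₐ[K] R[X] :=
  AlgHom.ofLinearMap
    { toFun := hd.expPolynomial
      map_add' a b := by
        ext s
        simp only [coeff_expPolynomial, coeff_add, iterate_map_add, smul_add]
      map_smul' c a := by
        ext s
        simp only [coeff_expPolynomial, coeff_smul, RingHom.id_apply, ← Module.End.pow_apply,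
          map_smul, smul_comm c] }
    (by
      ext s
      cases s <;>
        simp [coeff_expPolynomial, coeff_one, map_one_eq_zero_of_leibniz hd.leibniz,
          iterate_map_zero])
    (fun a b => by
      ext s
      simp [coeff_expPolynomial, coeff_mul,
        inv_factorial_smul_iterate_map_mul_of_leibniz hd.leibniz])

theorem coeff_exp (a : R) (s : ℕ) : (hd.exp a).coeff s = (s.factorial : K)⁻¹ • d^[s] a :=
  hd.coeff_expPolynomial a s

theorem exp_eq_sum {a : R} {m : ℕ} (hm : d^[m] a = 0) :
    hd.exp a = ∑ s ∈ range m, monomial s ((s.factorial : K)⁻¹ • d^[s] a) := by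
  ext s
  simp only [coeff_exp, finsetSum_coeff, coeff_monomial, sum_ite_eq', mem_range]
  split_ifs with hs
  · rfl
  · rw [iterate_apply_eq_zero_of_le (not_lt.1 hs) hm, smul_zero]

/-- The exponential `a ↦ e^{p∂} a` at a central element `p` of an algebra `B`, where `f` tells how
to read the elements of `R` in `B`. -/
def expAt (f : R →ₐ[K] B) (p : Subalgebra.center K B) : R →ₐ[K] B :=
  (evalCentral f p).comp hd.exp

theorem expAt_eq_sum (f : R →ₐ[K] B) (p : Subalgebra.center K B) {a : R} {m : ℕ}
    (hm : d^[m] a = 0) :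
    hd.expAt f p a = ∑ s ∈ range m, (s.factorial : K)⁻¹ • (f (d^[s] a) * (p : B) ^ s) := by
  simp only [expAt, AlgHom.comp_apply, hd.exp_eq_sum hm, map_sum, evalCentral_monomial, map_smul,
    smul_mul_assoc]

theorem expAt_zero (f : R →ₐ[K] B) : hd.expAt f 0 = f := by
  ext a
  obtain ⟨m, hm⟩ := hd.exists_iterate_eq_zero a
  rw [hd.expAt_eq_sum f 0 (iterate_apply_eq_zero_of_le m.le_succ hm), sum_range_succ']
  simp

theorem expAt_neg (f : R →ₐ[K] B) (p : Subalgebra.center K B) :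
    hd.neg.expAt f p = hd.expAt f (-p) := by
  ext a
  obtain ⟨m, hm⟩ := hd.exists_iterate_eq_zero a
  have hm' : (-d)^[m] a = 0 := by rw [iterate_neg_apply, hm, smul_zero]
  rw [hd.expAt_eq_sum f (-p) hm, hd.neg.expAt_eq_sum f p hm']
  refine sum_congr rfl fun s _ => ?_
  rw [iterate_neg_apply]
  rcases s.even_or_odd with hs | hs <;> simp [hs.neg_pow]

theorem expAt_expAt (f : R →ₐ[K] B) (p q : Subalgebra.center K B) :
    hd.expAt (hd.expAt f q) p = hd.expAt f (p + q) := by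
  ext a
  obtain ⟨m, hm⟩ := hd.exists_iterate_eq_zero a
  have hinner : ∀ s ∈ range m, hd.expAt f q (d^[s] a) =
      ∑ r ∈ range (m - s), (r.factorial : K)⁻¹ • (f (d^[s + r] a) * (q : B) ^ r) := by
    intro s hs
    have hms : d^[m - s] (d^[s] a) = 0 := by
      rwa [← Function.iterate_add_apply, Nat.sub_add_cancel (mem_range.1 hs).le]
    simp only [hd.expAt_eq_sum f q hms, ← Function.iterate_add_apply, add_comm]
  have hcomm : Commute (p : B) q := Subalgebra.mem_center_iff.1 q.2 p
  rw [hd.expAt_eq_sum _ p hm, hd.expAt_eq_sum f _ hm]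
  calc _ = ∑ s ∈ range m, ∑ r ∈ range (m - s), ((s.factorial : K)⁻¹ * (r.factorial : K)⁻¹) •
        (f (d^[s + r] a) * ((p : B) ^ s * (q : B) ^ r)) := by
        refine sum_congr rfl fun s hs => ?_
        rw [hinner s hs, sum_mul, smul_sum]
        refine sum_congr rfl fun r _ => ?_
        rw [smul_mul_assoc, smul_smul, mul_assoc, (hcomm.pow_pow s r).eq]
    _ = ∑ n ∈ range m, ∑ s ∈ range (n + 1),
        ((s.factorial : K)⁻¹ * ((n - s).factorial : K)⁻¹) •
          (f (d^[s + (n - s)] a) * ((p : B) ^ s * (q : B) ^ (n - s))) :=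
        (sum_range_diag_flip m fun s r => ((s.factorial : K)⁻¹ * (r.factorial : K)⁻¹) •
          (f (d^[s + r] a) * ((p : B) ^ s * (q : B) ^ r))).symm
    _ = _ := by
        refine sum_congr rfl fun n _ => ?_
        rw [Subalgebra.coe_add, hcomm.add_pow, mul_sum, smul_sum]
        refine sum_congr rfl fun s hs => ?_
        have hsn : s ≤ n := Nat.lt_succ_iff.1 (mem_range.1 hs)
        rw [Nat.add_sub_cancel' hsn, ← nsmul_eq_mul', mul_smul_comm,
          ← Nat.cast_smul_eq_nsmul K, smul_smul, Nat.cast_choose K hsn]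
        congr 1
        have := Nat.factorial_ne_zero n
        field_simp

theorem comp_expAt {B' : Type*} [Ring B'] [Algebra K B'] (g : B →ₐ[K] B') (f : R →ₐ[K] B)
    {p : Subalgebra.center K B} {p' : Subalgebra.center K B'} (hp : g p = p') :
    g.comp (hd.expAt f p) = hd.expAt (g.comp f) p' := by
  ext a
  obtain ⟨m, hm⟩ := hd.exists_iterate_eq_zero a
  simp [hd.expAt_eq_sum _ _ hm, hp]

theorem expAt_CAlgHom_X : hd.expAt CAlgHom ⟨X, X_mem_center⟩ = hd.exp := by
  ext1 a
  obtain ⟨m, hm⟩ := hd.exists_iterate_eq_zero a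
  simp only [hd.expAt_eq_sum _ _ hm, hd.exp_eq_sum hm, CAlgHom_apply, C_mul_X_pow_eq_monomial,
    smul_monomial]

end Exponential

section DiffIso

variable {K R : Type*} [Field K] [CharZero K] [Ring R] [Algebra K R] {d : R →ₗ[K] R}
  (hd : IsLocallyNilpotentDerivation d)

/-- The map `φ : h ⊗ a ↦ ∑ₛ D^{(s)} h ⊗ ∂^s(a)` from `Diff A` to `Diff° A`, as the extension of
`a ↦ e^{D∂} a` to an algebra endomorphism of `A[D]` that fixes `D`. -/
def diffHom : R[X] →ₐ[K] R[X] :=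
  evalCentral hd.exp ⟨X, X_mem_center⟩

@[simp]
theorem diffHom_C (a : R) : hd.diffHom (C a) = hd.exp a :=
  evalCentral_C _ _ _

@[simp]
theorem diffHom_X : hd.diffHom X = X :=
  evalCentral_X _ _

theorem diffHom_X_pow_mul_C (t : ℕ) {a : R} {m : ℕ} (hm : d^[m] a = 0) :
    hd.diffHom (X ^ t * C a) =
      ∑ s ∈ range m, (s.factorial : K)⁻¹ • (X ^ (t + s) * C (d^[s] a)) := by
  rw [map_mul, map_pow, diffHom_X, diffHom_C, ← expAt_CAlgHom_X, hd.expAt_eq_sum _ _ hm, mul_sum]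
  refine sum_congr rfl fun s _ => ?_
  rw [CAlgHom_apply, mul_smul_comm, ← X_pow_mul, ← mul_assoc, ← pow_add]

theorem neg_diffHom_X_pow_mul_C (t : ℕ) {a : R} {m : ℕ} (hm : d^[m] a = 0) :
    hd.neg.diffHom (X ^ t * C a) =
      ∑ s ∈ range m, ((-1) ^ s * (s.factorial : K)⁻¹) • (X ^ (t + s) * C (d^[s] a)) := by
  rw [hd.neg.diffHom_X_pow_mul_C t (by rw [iterate_neg_apply, hm, smul_zero])]
  refine sum_congr rfl fun s _ => ?_
  rw [iterate_neg_apply, ← smul_C, mul_smul_comm, smul_smul, mul_comm]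

theorem neg_diffHom_comp_diffHom : hd.neg.diffHom.comp hd.diffHom = AlgHom.id K R[X] := by
  refine algHom_ext' ?_ (by simp)
  calc (hd.neg.diffHom.comp hd.diffHom).comp CAlgHom
      = hd.expAt hd.neg.exp ⟨X, X_mem_center⟩ := by
        ext1 a
        simp [expAt, diffHom]
    _ = hd.expAt (hd.expAt CAlgHom (-⟨X, X_mem_center⟩)) ⟨X, X_mem_center⟩ := by
        rw [← hd.expAt_neg, expAt_CAlgHom_X]
    _ = CAlgHom := by rw [expAt_expAt, add_neg_cancel, expAt_zero]

/-- The isomorphism of `H`-modules `φ : Diff A ≃ Diff° A`. Its inverse is the same map for the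
derivation `-∂`. -/
def diffEquiv : R[X] ≃ₐ[K] R[X] :=
  AlgEquiv.ofAlgHom hd.diffHom hd.neg.diffHom
    (by simpa only [neg_neg] using hd.neg.neg_diffHom_comp_diffHom)
    hd.neg_diffHom_comp_diffHom

end DiffIso

section LambdaProducts

variable {K R : Type*}

section CentralElements

variable (K R) [CommSemiring K] [Semiring R] [Algebra K R]

/-- The element `D` of `A[D][λ]`. -/
def centralD : Subalgebra.center K R[X][X] :=
  ⟨C X, C_mem_center X_mem_center⟩

/-- The element `λ` of `A[D][λ]`. -/
def centralLambda : Subalgebra.center K R[X][X] :=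
  ⟨X, X_mem_center⟩

/-- The inclusion `A → A[D][λ]`. -/
def constHom : R →ₐ[K] R[X][X] :=
  CAlgHom.comp CAlgHom

end CentralElements

variable [Field K] [CharZero K] [Ring R] [Algebra K R] {d : R →ₗ[K] R}
  (hd : IsLocallyNilpotentDerivation d)

/-- The `λ`-product `∑ₙ λ^n / n! (x ∘_n y)` of `Diff A`, an element of `A[D][λ]`: it is
`f(D)a ∘_λ g(D)b = f(-λ) a · g(D+λ) e^{λ∂} b`. -/
def diffProduct (x y : R[X]) : R[X][X] :=
  evalCentral (constHom K R) (-centralLambda K R) x *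
    evalCentral (hd.expAt (constHom K R) (centralLambda K R)) (centralD K R + centralLambda K R) y

/-- The `λ`-product `∑ₙ λ^n / n! (x ∘_(n) y)` of `Diff° A`, an element of `A[D][λ]`: it is
`f(D)a ∘_λ g(D)b = f(-λ) (e^{(D+λ)∂} a) · g(D+λ) b`. -/
def diffCircProduct (x y : R[X]) : R[X][X] :=
  evalCentral (hd.expAt (constHom K R) (centralD K R + centralLambda K R)) (-centralLambda K R) x *
    evalCentral (constHom K R) (centralD K R + centralLambda K R) y

theorem expAt_constHom_centralD :
    hd.expAt (constHom K R) (centralD K R) = CAlgHom.comp hd.exp := by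
  rw [← expAt_CAlgHom_X]
  exact (hd.comp_expAt CAlgHom CAlgHom rfl).symm

theorem coeff_expAt_constHom_centralLambda (a : R) (m : ℕ) :
    (hd.expAt (constHom K R) (centralLambda K R) a).coeff m =
      C ((m.factorial : K)⁻¹ • d^[m] a) := by
  have h : hd.expAt (constHom K R) (centralLambda K R) = (mapAlgHom CAlgHom).comp hd.exp := by
    rw [← expAt_CAlgHom_X, hd.comp_expAt (mapAlgHom CAlgHom) CAlgHom
      (p' := centralLambda K R) (by simp [centralLambda])]
    congr 1
    ext1 a
    simp [constHom]
  simp [h, coeff_exp]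

theorem mapAlgHom_diffHom_comp_constHom :
    (mapAlgHom hd.diffHom).comp (constHom K R) = hd.expAt (constHom K R) (centralD K R) := by
  rw [expAt_constHom_centralD]
  ext1 a
  simp [constHom]

theorem mapAlgHom_diffHom_comp_evalCentral_constHom :
    (mapAlgHom hd.diffHom).comp (evalCentral (constHom K R) (-centralLambda K R)) =
      (evalCentral (hd.expAt (constHom K R) (centralD K R + centralLambda K R))
        (-centralLambda K R)).comp hd.diffHom := by
  have hcancel : -centralLambda K R + (centralD K R + centralLambda K R) = centralD K R :=
    neg_add_cancel_comm_assoc (centralLambda K R) (centralD K R)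
  refine algHom_ext' ?_ (by simp [centralLambda])
  calc _ = (mapAlgHom hd.diffHom).comp (constHom K R) := by ext1 a; simp
    _ = hd.expAt (hd.expAt (constHom K R) (centralD K R + centralLambda K R))
          (-centralLambda K R) := by
        rw [mapAlgHom_diffHom_comp_constHom, expAt_expAt, hcancel]
    _ = _ := by ext1 a; simp [expAt]

theorem mapAlgHom_diffHom_comp_evalCentral_expAt :
    (mapAlgHom hd.diffHom).comp (evalCentral (hd.expAt (constHom K R) (centralLambda K R))
        (centralD K R + centralLambda K R)) =
      (evalCentral (constHom K R) (centralD K R + centralLambda K R)).comp hd.diffHom := by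
  refine algHom_ext' ?_ (by simp [centralD, centralLambda])
  calc _ = (mapAlgHom hd.diffHom).comp (hd.expAt (constHom K R) (centralLambda K R)) := by
        ext1 a; simp
    _ = hd.expAt (hd.expAt (constHom K R) (centralD K R)) (centralLambda K R) := by
        rw [hd.comp_expAt (p' := centralLambda K R) _ _ (by simp [centralLambda]),
          mapAlgHom_diffHom_comp_constHom]
    _ = hd.expAt (constHom K R) (centralD K R + centralLambda K R) := by
        rw [expAt_expAt, add_comm]
    _ = _ := by ext1 a; simp [expAt]

theorem mapAlgHom_diffHom_diffProduct (x y : R[X]) :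
    mapAlgHom hd.diffHom (hd.diffProduct x y) =
      hd.diffCircProduct (hd.diffHom x) (hd.diffHom y) := by
  rw [diffProduct, map_mul]
  exact congr_arg₂ _ (DFunLike.congr_fun hd.mapAlgHom_diffHom_comp_evalCentral_constHom x)
    (DFunLike.congr_fun hd.mapAlgHom_diffHom_comp_evalCentral_expAt y)

theorem factorial_smul_coeff_diffProduct_term (a b : R) (s t n : ℕ) :
    n.factorial • ((C (C a) * (-X) ^ s) *
      (hd.expAt (constHom K R) (centralLambda K R) b * (C X + X) ^ t) : R[X][X]).coeff n =
    ∑ j ∈ range (t + 1), if s + j ≤ n then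
      ((-1 : ℤ) ^ s * (t.choose j : ℤ) * (n.descFactorial (s + j) : ℤ)) •
        (X ^ (t - j) * C (a * d^[n - s - j] b)) else 0 := by
  set e := hd.expAt (constHom K R) (centralLambda K R) b with he
  have hexpand : (C (C a) * (-X) ^ s) * (e * (C X + X) ^ t) =
      ∑ j ∈ range (t + 1), ((-1 : ℤ) ^ s * (t.choose j : ℤ)) •
        (C (C a) * e * C (X ^ (t - j)) * X ^ (s + j)) := by
    rw [neg_pow_eq_zsmul, add_comm (C X), (commute_X (C X)).add_pow, mul_sum, mul_sum]
    refine sum_congr rfl fun j _ => ?_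
    rw [← nsmul_eq_mul', ← natCast_zsmul, mul_smul_comm, smul_mul_assoc, mul_smul_comm,
      mul_smul_comm, smul_smul, C_pow, mul_assoc, X_pow_mul, add_comm s, pow_add,
      X_pow_mul (n := j)]
    simp only [mul_assoc]
  rw [hexpand, finsetSum_coeff, smul_sum]
  refine sum_congr rfl fun j _ => ?_
  rw [coeff_smul, coeff_mul_X_pow']
  split_ifs with hj
  · rw [coeff_mul_C, coeff_C_mul, he, coeff_expAt_constHom_centralLambda, ← C_mul, ← X_pow_mul,
      mul_smul_comm, ← smul_C, mul_smul_comm]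
    have hfac : (n.factorial : K) * ((n - (s + j)).factorial : K)⁻¹ = n.descFactorial (s + j) := by
      rw [← Nat.factorial_mul_descFactorial hj]
      have := Nat.factorial_ne_zero (n - (s + j))
      push_cast
      field_simp
    rw [← Nat.cast_smul_eq_nsmul K, smul_comm, smul_smul, hfac, Nat.cast_smul_eq_nsmul,
      ← natCast_zsmul, smul_smul, Nat.sub_sub]
  · simp

theorem factorial_smul_coeff_diffProduct (x y : R[X]) (n : ℕ) :
    n.factorial • (hd.diffProduct x y).coeff n = nmulD K R d x y n := by
  rw [diffProduct, evalCentral_eq_sum_range, evalCentral_eq_sum_range, sum_mul_sum,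
    finsetSum_coeff, smul_sum]
  refine sum_congr rfl fun s _ => ?_
  rw [finsetSum_coeff, smul_sum]
  refine sum_congr rfl fun t _ => ?_
  exact hd.factorial_smul_coeff_diffProduct_term _ _ _ _ _

theorem factorial_smul_coeff_diffCircProduct_term {a : R} (b : R) (u t n : ℕ) {M : ℕ}
    (hM : d^[M] a = 0) :
    n.factorial • ((hd.expAt (constHom K R) (centralD K R + centralLambda K R) a * (-X) ^ u) *
      (C (C b) * (C X + X) ^ t) : R[X][X]).coeff n =
    ∑ m ∈ range M, if u ≤ n then
        (((-1 : K) ^ u * (n.factorial : K) * ((m.factorial : K))⁻¹ *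
            ((t + m).choose (n - u) : K)) •
          (X ^ (t + m - (n - u)) * C (d^[m] a * b)))
      else 0 := by
  have hexpand : hd.expAt (constHom K R) (centralD K R + centralLambda K R) a * (-X) ^ u *
        (C (C b) * (C X + X) ^ t) = ∑ m ∈ range M, ((-1 : K) ^ u * (m.factorial : K)⁻¹) •
          (C (C (d^[m] a * b)) * (X + C X) ^ (t + m) * X ^ u) := by
    rw [hd.expAt_eq_sum _ _ hM, sum_mul, sum_mul]
    refine sum_congr rfl fun m _ => ?_
    simp only [constHom, centralD, centralLambda, Subalgebra.coe_add, AlgHom.comp_apply,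
      CAlgHom_apply, add_comm (C X)]
    have hcomm : (X + C X) ^ m * (C (C b) * (X + C X) ^ t) =
        C (C b) * (X + C X) ^ t * (X + C X) ^ m :=
      (Subalgebra.mem_center_iff.1 (pow_mem (add_mem X_mem_center
        (C_mem_center (K := K) X_mem_center)) m) _).symm
    rw [neg_pow_eq_zsmul, ← Int.cast_smul_eq_zsmul K, smul_mul_assoc, smul_mul_assoc, mul_smul_comm,
      smul_mul_assoc, smul_comm, smul_smul, mul_assoc, X_pow_mul, ← mul_assoc,
      mul_assoc (C (C _)), hcomm, C_mul, C_mul, pow_add]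
    push_cast
    simp only [mul_assoc]
  rw [hexpand, finsetSum_coeff, smul_sum]
  refine sum_congr rfl fun m _ => ?_
  rw [coeff_smul, coeff_mul_X_pow']
  split_ifs with hu
  · rw [coeff_C_mul, coeff_X_add_C_pow, ← nsmul_eq_mul', mul_smul_comm, ← X_pow_mul,
      ← Nat.cast_smul_eq_nsmul K, ← Nat.cast_smul_eq_nsmul K, smul_smul, smul_smul]
    congr 1
    ring
  · simp

theorem factorial_smul_coeff_diffCircProduct (x y : R[X]) (n : ℕ) {M : ℕ}
    (hM : ∀ u, d^[M] (x.coeff u) = 0) :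
    n.factorial • (hd.diffCircProduct x y).coeff n = nmulCirc K R d x y n M := by
  rw [diffCircProduct, evalCentral_eq_sum_range, evalCentral_eq_sum_range, sum_mul_sum,
    finsetSum_coeff, smul_sum]
  refine sum_congr rfl fun u _ => ?_
  rw [finsetSum_coeff, smul_sum]
  refine sum_congr rfl fun t _ => ?_
  exact hd.factorial_smul_coeff_diffCircProduct_term _ _ _ _ (hM u)

end LambdaProducts

end IsLocallyNilpotentDerivation

/-- Proposition 2.3.2: `Diff A ≅ Diff° A` via
`φ(h ⊗ a) = Σ_s D^{(s)}h ⊗ ∂^s(a)`, with inverse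
`h ⊗ a ↦ Σ_s (-D)^{(s)}h ⊗ ∂^s(a)`; `φ` is `H`-linear and intertwines the
products of `Diff A` with those of `Diff° A`. -/
theorem diff_iso_diffCirc (d : A →ₗ[k] A)
    (hleib : ∀ a b : A, d (a * b) = d a * b + a * d b)
    (hln : ∀ a : A, ∃ n : ℕ, (⇑d)^[n] a = 0) :
    ∃ φ : Polynomial A ≃ₗ[k] Polynomial A,
      (∀ (t : ℕ) (a : A) (m : ℕ), (⇑d)^[m] a = 0 →
        φ ((Polynomial.X : Polynomial A) ^ t * Polynomial.C a) =
          ∑ s ∈ Finset.range m, ((Nat.factorial s : k))⁻¹ •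
            ((Polynomial.X : Polynomial A) ^ (t + s) * Polynomial.C ((⇑d)^[s] a))) ∧
      (∀ (t : ℕ) (a : A) (m : ℕ), (⇑d)^[m] a = 0 →
        φ.symm ((Polynomial.X : Polynomial A) ^ t * Polynomial.C a) =
          ∑ s ∈ Finset.range m, ((-1 : k) ^ s * ((Nat.factorial s : k))⁻¹) •
            ((Polynomial.X : Polynomial A) ^ (t + s) * Polynomial.C ((⇑d)^[s] a))) ∧
      (∀ x : Polynomial A, φ ((Polynomial.X : Polynomial A) * x)
        = (Polynomial.X : Polynomial A) * φ x) ∧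
      (∀ (x y : Polynomial A) (n M : ℕ),
        (∀ u : ℕ, (⇑d)^[M] ((φ x).coeff u) = 0) →
        φ (nmulD k A d x y n) = nmulCirc k A d (φ x) (φ y) n M) := by
  have hd : IsLocallyNilpotentDerivation d := ⟨hleib, hln⟩
  refine ⟨hd.diffEquiv.toLinearEquiv, fun t _ _ hm => hd.diffHom_X_pow_mul_C t hm,
    fun t _ _ hm => hd.neg_diffHom_X_pow_mul_C t hm, fun x => ?_,
    fun x y n M (hM : ∀ u, d^[M] ((hd.diffHom x).coeff u) = 0) => ?_⟩
  · change hd.diffHom (X * x) = X * hd.diffHom x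
    rw [map_mul, hd.diffHom_X]
  · change hd.diffHom _ = nmulCirc k A d (hd.diffHom x) (hd.diffHom y) n M
    rw [← hd.factorial_smul_coeff_diffProduct, map_nsmul, ← coeff_mapAlgHom_apply,
      hd.mapAlgHom_diffHom_diffProduct, hd.factorial_smul_coeff_diffCircProduct _ _ _ hM]

end
end
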